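/- arXiv:1104.4051 — 3 statements merged into one kernel-verified Lean document; each statement's English description precedes it below -/
import Mathlib

section
/- For every integer n ≥ 3, the set of values of the permanent on Λ̂_n^3 equals the set of all products a(n_1)·a(n_2)⋯a(n_m), where {n_1,…,n_m} ranges over all partitions of n with parts ≥ 3. That is, {per A : A ∈ Λ̂_n^3} = { ∏_{i=1}^m a(n_i) : n_1+⋯+n_m = n, each n_i ≥ 3 }. -/
open Matrix

/-- `Λ̂_n^3`: symmetric (0,1)-matrices with exactly three 1's in every row and
every column, and with 1's on the main diagonal. -/
def LambdaHat3 (n : ℕ) : Set (Matrix (Fin n) (Fin n) ℤ) :=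
  {A | (∀ i j, A i j = 0 ∨ A i j = 1) ∧ (∀ i, ∑ j, A i j = 3) ∧ (∀ j, ∑ i, A i j = 3) ∧
    A.IsSymm ∧ (∀ i, A i i = 1)}

/-! A matrix `A` lies in `Λ̂_n^3` exactly when `A = I + A(G)` for a 2-regular graph `G` on `n`
vertices. A finite 2-regular graph is a disjoint union of cycles of length at least 3: it contains a
cycle, and no vertex of that cycle has a neighbour outside it. As the permanent is multiplicative
on block diagonal matrices, it remains to compute `per (I + A(C_p)) = fib p + 2 fib (p - 1) + 2`.
This counts the permutations of the cycle that move every vertex to itself or to a neighbour: they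
are the products of disjoint transpositions of adjacent vertices, which are counted through paths
and Fibonacci numbers, and the two rotations, which turn the Fibonacci recurrence into
`a n = a (n - 1) + a (n - 2) - 2`. -/

section Permanent

variable {R m n : Type*} [CommSemiring R] [Fintype m] [DecidableEq m] [Fintype n] [DecidableEq n]

theorem permanent_submatrix_equiv_self (e : m ≃ n) (A : Matrix n n R) :
    (A.submatrix e e).permanent = A.permanent :=
  Fintype.sum_equiv e.permCongr _ _ fun σ => Fintype.prod_equiv e _ _ fun i => by simp

theorem permanent_fromBlocks_zero₂₁ (A : Matrix m m R) (B : Matrix m n R) (D : Matrix n n R) :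
    (fromBlocks A B 0 D).permanent = A.permanent * D.permanent := by
  simp only [permanent]
  rw [Finset.sum_mul_sum, ← Finset.sum_product', Finset.univ_product_univ]
  symm
  refine Finset.sum_of_injOn (fun σ => Equiv.Perm.sumCongr σ.1 σ.2)
    Equiv.Perm.sumCongrHom_injective.injOn (by simp) (fun σ _ hσ => ?_) fun σ _ => ?_
  · have hmaps : ¬ Set.MapsTo σ (Set.range Sum.inl) (Set.range Sum.inl) := fun h =>
      have ⟨τ, hτ⟩ := Equiv.Perm.mem_sumCongrHom_range_of_perm_mapsTo_inl h
      hσ ⟨τ, by simp, hτ⟩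
    simp only [Set.MapsTo, Set.forall_mem_range, not_forall] at hmaps
    obtain ⟨i, hi⟩ := hmaps
    obtain ⟨j, hj⟩ : ∃ j, σ (Sum.inl i) = Sum.inr j := by
      rcases hσi : σ (Sum.inl i) with j | j
      · exact absurd ⟨j, hσi.symm⟩ hi
      · exact ⟨j, rfl⟩
    exact Finset.prod_eq_zero (Finset.mem_univ (Sum.inl i)) (by simp [hj])
  · simp [Fintype.prod_sum_type]

theorem perm_eq_one_of_forall_apply_le {α : Type*} [Finite α] [PartialOrder α] {σ : Equiv.Perm α}
    (h : ∀ i, σ i ≤ i) : σ = 1 := by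
  refine Equiv.ext fun i => (h i).antisymm ?_
  calc i = (σ ^ (orderOf σ - 1 + 1)) i := by
        rw [Nat.sub_add_cancel (orderOf_pos σ), pow_orderOf_eq_one, Equiv.Perm.one_apply]
    _ = σ^[orderOf σ - 1] (σ i) := by rw [pow_succ, Equiv.Perm.mul_apply, Equiv.Perm.coe_pow]
    _ ≤ σ i := Function.iterate_le_id_of_le_id h _ _

theorem permanent_of_isUpperTriangular {A : Matrix n n R} [LinearOrder n]
    (hA : A.IsUpperTriangular) : A.permanent = ∏ i, A i i := by
  rw [permanent, Finset.sum_eq_single 1 _ (by simp)]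
  · simp
  · intro σ _ hσ
    obtain ⟨i, hi⟩ : ∃ i, i < σ i := by
      contrapose! hσ
      exact perm_eq_one_of_forall_apply_le hσ
    exact Finset.prod_eq_zero (Finset.mem_univ i) (hA hi)

theorem permanent_succ_column_zero {k : ℕ} (A : Matrix (Fin (k + 1)) (Fin (k + 1)) R) :
    A.permanent = ∑ i, A i 0 * (A.submatrix i.succAbove Fin.succ).permanent := by
  rw [permanent, Finset.univ_perm_fin_succ, ← Finset.univ_product_univ]
  simp only [Finset.sum_map, Equiv.toEmbedding_apply, Finset.sum_product]
  refine Finset.sum_congr rfl fun i _ => ?_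
  refine Fin.cases ?_ (fun i => ?_) i
  · simp [Fin.prod_univ_succ, permanent, Finset.mul_sum]
  · rw [← permanent_permute_cols i.cycleRange, permanent, Finset.mul_sum]
    simp [Fin.prod_univ_succ, Fin.succAbove_cycleRange]

theorem permanent_succ_row_zero {k : ℕ} (A : Matrix (Fin (k + 1)) (Fin (k + 1)) R) :
    A.permanent = ∑ j, A 0 j * (A.submatrix Fin.succ j.succAbove).permanent := by
  rw [← permanent_transpose, permanent_succ_column_zero]
  simp only [transpose_apply, ← transpose_submatrix, permanent_transpose]

theorem permanent_of_column_zero_eq_zero {k : ℕ} {A : Matrix (Fin (k + 1)) (Fin (k + 1)) R}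
    (hA : ∀ i : Fin k, A i.succ 0 = 0) :
    A.permanent = A 0 0 * (A.submatrix Fin.succ Fin.succ).permanent := by
  simp [permanent_succ_column_zero, Fin.sum_univ_succ, hA]

theorem permanent_of_column_zero_eq_zero_of_ne_last {k : ℕ}
    {A : Matrix (Fin (k + 2)) (Fin (k + 2)) R} (hA : ∀ i : Fin k, A i.castSucc.succ 0 = 0) :
    A.permanent = A 0 0 * (A.submatrix Fin.succ Fin.succ).permanent +
      A (Fin.last _) 0 * (A.submatrix Fin.castSucc Fin.succ).permanent := by
  simp [permanent_succ_column_zero, Fin.sum_univ_succ (n := k + 1), Fin.sum_univ_castSucc, hA]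

end Permanent

section ClosedNeighborhood

open SimpleGraph

variable {V W : Type*} [DecidableEq V] [DecidableEq W]

/-- The closed neighbourhood matrix `I + A(G)` of a graph. Its permanent counts the permutations
of the vertices that move every vertex to itself or to a neighbour. -/
def closedNbhdMatrix (R : Type*) [Semiring R] (G : SimpleGraph V) [DecidableRel G.Adj] :
    Matrix V V R :=
  1 + G.adjMatrix R

variable (R : Type*) [Semiring R]
variable {G : SimpleGraph V} [DecidableRel G.Adj] {H : SimpleGraph W} [DecidableRel H.Adj]

theorem closedNbhdMatrix_apply (v w : V) :
    closedNbhdMatrix R G v w = if v = w ∨ G.Adj v w then 1 else 0 := by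
  by_cases h : v = w <;> simp [closedNbhdMatrix, one_apply, h]

theorem sum_closedNbhdMatrix_row [Fintype V] (v : V) :
    ∑ w, closedNbhdMatrix R G v w = 1 + G.degree v := by
  simp [closedNbhdMatrix, Finset.sum_add_distrib, one_apply, ← card_neighborFinset_eq_degree,
    neighborFinset_eq_filter]

theorem isSymm_closedNbhdMatrix : (closedNbhdMatrix R G).IsSymm :=
  isSymm_one.add (isSymm_adjMatrix G)

theorem closedNbhdMatrix_submatrix_embedding (f : G ↪g H) :
    (closedNbhdMatrix R H).submatrix f f = closedNbhdMatrix R G := by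
  ext v w
  simp [closedNbhdMatrix_apply]

theorem closedNbhdMatrix_sum [DecidableRel (G ⊕g H).Adj] :
    closedNbhdMatrix R (G ⊕g H) =
      fromBlocks (closedNbhdMatrix R G) 0 0 (closedNbhdMatrix R H) := by
  ext (v | v) (w | w) <;> simp [closedNbhdMatrix_apply]

theorem permanent_closedNbhdMatrix_of_iso_sum (R : Type*) [CommSemiring R] [Fintype V] [Fintype W]
    {X : Type*} [Fintype X] [DecidableEq X] {K : SimpleGraph X} [DecidableRel K.Adj]
    (e : G ⊕g H ≃g K) :
    (closedNbhdMatrix R K).permanent =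
      (closedNbhdMatrix R G).permanent * (closedNbhdMatrix R H).permanent := by
  classical
  rw [← permanent_fromBlocks_zero₂₁ _ 0, ← closedNbhdMatrix_sum,
    ← closedNbhdMatrix_submatrix_embedding R e.toEmbedding]
  exact (permanent_submatrix_equiv_self e.toEquiv _).symm

end ClosedNeighborhood

section PathAndCycle

open SimpleGraph

instance decidableRelPathGraphAdj (k : ℕ) : DecidableRel (pathGraph k).Adj :=
  fun _ _ => decidable_of_iff' _ pathGraph_adj

section Entries

variable (R : Type*) [Semiring R]

theorem closedNbhdMatrix_pathGraph_apply {k : ℕ} (i j : Fin k) :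
    closedNbhdMatrix R (pathGraph k) i j =
      if (i : ℕ) ≤ j + 1 ∧ (j : ℕ) ≤ i + 1 then 1 else 0 := by
  rw [closedNbhdMatrix_apply]
  refine if_congr ?_ rfl rfl
  rw [pathGraph_adj]
  omega

theorem closedNbhdMatrix_cycleGraph_apply {k : ℕ} (i j : Fin k) :
    closedNbhdMatrix R (cycleGraph k) i j =
      if ((i : ℕ) ≤ j + 1 ∧ (j : ℕ) ≤ i + 1) ∨ ((i : ℕ) = 0 ∧ (j : ℕ) + 1 = k) ∨
        ((j : ℕ) = 0 ∧ (i : ℕ) + 1 = k) then 1 else 0 := by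
  rw [closedNbhdMatrix_apply]
  refine if_congr ?_ rfl rfl
  rw [cycleGraph_adj', Fin.ext_iff]
  rcases lt_trichotomy i j with hij | rfl | hij
  · rw [Fin.coe_sub_iff_lt.mpr hij, Fin.sub_val_of_le hij.le]
    omega
  · simp
  · rw [Fin.coe_sub_iff_lt.mpr hij, Fin.sub_val_of_le hij.le]
    omega

theorem closedNbhdMatrix_pathGraph_submatrix_succ (k : ℕ) :
    (closedNbhdMatrix R (pathGraph (k + 1))).submatrix Fin.succ Fin.succ =
      closedNbhdMatrix R (pathGraph k) := by
  ext i j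
  simp [closedNbhdMatrix_pathGraph_apply]

theorem closedNbhdMatrix_pathGraph_submatrix_castSucc (k : ℕ) :
    (closedNbhdMatrix R (pathGraph (k + 1))).submatrix Fin.castSucc Fin.castSucc =
      closedNbhdMatrix R (pathGraph k) := by
  ext i j
  simp [closedNbhdMatrix_pathGraph_apply]

theorem closedNbhdMatrix_cycleGraph_submatrix_succ (k : ℕ) :
    (closedNbhdMatrix R (cycleGraph (k + 1))).submatrix Fin.succ Fin.succ =
      closedNbhdMatrix R (pathGraph k) := by
  ext i j
  simp [closedNbhdMatrix_pathGraph_apply, closedNbhdMatrix_cycleGraph_apply]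

end Entries

variable (R : Type*) [CommSemiring R]

theorem permanent_closedNbhdMatrix_pathGraph_add_two (k : ℕ) :
    (closedNbhdMatrix R (pathGraph (k + 2))).permanent =
      (closedNbhdMatrix R (pathGraph (k + 1))).permanent +
        (closedNbhdMatrix R (pathGraph k)).permanent := by
  set M := closedNbhdMatrix R (pathGraph (k + 2)) with hM
  have expand : M.permanent = (M.submatrix Fin.succ Fin.succ).permanent +
      (M.submatrix Fin.succ (Fin.succAbove 1)).permanent := by
    rw [permanent_succ_row_zero, Fin.sum_univ_succ, Fin.sum_univ_succ]
    simp [hM, closedNbhdMatrix_pathGraph_apply]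
  have minor_one : (M.submatrix Fin.succ (Fin.succAbove 1)).permanent =
      ((M.submatrix Fin.succ Fin.succ).submatrix Fin.succ Fin.succ).permanent := by
    rw [permanent_of_column_zero_eq_zero]
    · simp [hM, closedNbhdMatrix_pathGraph_apply, Function.comp_def]
    · simp [hM, closedNbhdMatrix_pathGraph_apply]
  rw [expand, minor_one, hM, closedNbhdMatrix_pathGraph_submatrix_succ,
    closedNbhdMatrix_pathGraph_submatrix_succ]

theorem permanent_closedNbhdMatrix_pathGraph (k : ℕ) :
    (closedNbhdMatrix R (pathGraph k)).permanent = (k + 1).fib := by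
  induction k using Nat.twoStepInduction with
  | zero => simp [permanent_isEmpty]
  | one => simp [closedNbhdMatrix_pathGraph_apply]
  | more k ih₀ ih₁ =>
    rw [permanent_closedNbhdMatrix_pathGraph_add_two, ih₀, ih₁, ← Nat.cast_add, add_comm,
      ← Nat.fib_add_two]

theorem permanent_closedNbhdMatrix_cycleGraph_submatrix_succ {k : ℕ}
    {f : Fin (k + 2) → Fin (k + 3)} (hf : f 0 = 0) :
    ((closedNbhdMatrix R (cycleGraph (k + 3))).submatrix Fin.succ f).permanent =
      ((closedNbhdMatrix R (cycleGraph (k + 3))).submatrix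
        (Fin.succ ∘ Fin.succ) (f ∘ Fin.succ)).permanent +
      ((closedNbhdMatrix R (cycleGraph (k + 3))).submatrix
        (Fin.succ ∘ Fin.castSucc) (f ∘ Fin.succ)).permanent := by
  rw [permanent_of_column_zero_eq_zero_of_ne_last]
  · simp [hf, closedNbhdMatrix_cycleGraph_apply, submatrix_submatrix]
  · intro i
    have := i.is_lt
    simp [hf, closedNbhdMatrix_cycleGraph_apply, this.ne]

-- This minor is upper unitriangular: its only term comes from the rotation of the cycle.
theorem permanent_closedNbhdMatrix_cycleGraph_minor_rotation (k : ℕ) :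
    ((closedNbhdMatrix R (cycleGraph (k + 3))).submatrix
      (Fin.succ ∘ Fin.succ) (Fin.succ ∘ Fin.castSucc)).permanent = 1 := by
  rw [permanent_of_isUpperTriangular]
  · simp [closedNbhdMatrix_cycleGraph_apply]
  · intro i j (hij : j < i)
    rw [Fin.lt_def] at hij
    rw [submatrix_apply, closedNbhdMatrix_cycleGraph_apply, if_neg]
    simp only [Function.comp_apply, Fin.val_succ, Fin.val_castSucc]
    omega

theorem permanent_closedNbhdMatrix_cycleGraph_expand_row_zero (k : ℕ) :
    (closedNbhdMatrix R (cycleGraph (k + 3))).permanent =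
      ((closedNbhdMatrix R (cycleGraph (k + 3))).submatrix Fin.succ Fin.succ).permanent +
      ((closedNbhdMatrix R (cycleGraph (k + 3))).submatrix Fin.succ (Fin.succAbove 1)).permanent +
      ((closedNbhdMatrix R (cycleGraph (k + 3))).submatrix Fin.succ Fin.castSucc).permanent := by
  have hzero (j : Fin k) : closedNbhdMatrix R (cycleGraph (k + 3)) 0 j.castSucc.succ.succ = 0 := by
    have := j.is_lt
    simp [closedNbhdMatrix_cycleGraph_apply, this.ne]
  rw [permanent_succ_row_zero, Fin.sum_univ_succ, Fin.sum_univ_succ, Fin.sum_univ_castSucc]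
  simp only [hzero, zero_mul, Finset.sum_const_zero, zero_add, ← add_assoc]
  simp [closedNbhdMatrix_cycleGraph_apply]

theorem permanent_closedNbhdMatrix_cycleGraph_minor_zero_one (k : ℕ) :
    ((closedNbhdMatrix R (cycleGraph (k + 3))).submatrix Fin.succ (Fin.succAbove 1)).permanent =
      (k + 2).fib + 1 := by
  have comp_succ : Fin.succAbove (1 : Fin (k + 3)) ∘ Fin.succ = Fin.succ ∘ Fin.succ := by
    ext i
    simp
  rw [permanent_closedNbhdMatrix_cycleGraph_submatrix_succ R (by simp), comp_succ,
    ← submatrix_submatrix, closedNbhdMatrix_cycleGraph_submatrix_succ,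
    closedNbhdMatrix_pathGraph_submatrix_succ, permanent_closedNbhdMatrix_pathGraph,
    ← permanent_transpose (submatrix _ _ _), transpose_submatrix, isSymm_closedNbhdMatrix R,
    permanent_closedNbhdMatrix_cycleGraph_minor_rotation]

theorem permanent_closedNbhdMatrix_cycleGraph_minor_zero_last (k : ℕ) :
    ((closedNbhdMatrix R (cycleGraph (k + 3))).submatrix Fin.succ Fin.castSucc).permanent =
      1 + (k + 2).fib := by
  have comp_succ : Fin.castSucc (n := k + 2) ∘ Fin.succ = Fin.succ ∘ Fin.castSucc := by
    ext i
    simp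
  rw [permanent_closedNbhdMatrix_cycleGraph_submatrix_succ R (by simp), comp_succ,
    permanent_closedNbhdMatrix_cycleGraph_minor_rotation,
    ← submatrix_submatrix, closedNbhdMatrix_cycleGraph_submatrix_succ,
    closedNbhdMatrix_pathGraph_submatrix_castSucc, permanent_closedNbhdMatrix_pathGraph]

theorem permanent_closedNbhdMatrix_cycleGraph (k : ℕ) :
    (closedNbhdMatrix R (cycleGraph (k + 3))).permanent =
      (k + 3).fib + 2 * (k + 2).fib + 2 := by
  rw [permanent_closedNbhdMatrix_cycleGraph_expand_row_zero,
    closedNbhdMatrix_cycleGraph_submatrix_succ, permanent_closedNbhdMatrix_pathGraph,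
    permanent_closedNbhdMatrix_cycleGraph_minor_zero_one,
    permanent_closedNbhdMatrix_cycleGraph_minor_zero_last]
  ring

end PathAndCycle

section RegularGraph

open SimpleGraph

variable {V W X : Type*} {G : SimpleGraph V} {H : SimpleGraph W}

theorem degree_sum_inl [LocallyFinite G] [LocallyFinite (G ⊕g H)] (v : V) :
    (G ⊕g H).degree (.inl v) = G.degree v := by
  simp only [← card_neighborSet_eq_degree, ← Nat.card_eq_fintype_card, neighborSet_sum_inl,
    Nat.card_image_of_injective Sum.inl_injective]

theorem degree_sum_inr [LocallyFinite H] [LocallyFinite (G ⊕g H)] (w : W) :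
    (G ⊕g H).degree (.inr w) = H.degree w := by
  simp only [← card_neighborSet_eq_degree, ← Nat.card_eq_fintype_card, neighborSet_sum_inr,
    Nat.card_image_of_injective Sum.inr_injective]

theorem isRegularOfDegree_iff_of_iso_sum {K : SimpleGraph X} [LocallyFinite G] [LocallyFinite H]
    [LocallyFinite K] {d : ℕ} (e : G ⊕g H ≃g K) :
    K.IsRegularOfDegree d ↔ G.IsRegularOfDegree d ∧ H.IsRegularOfDegree d := by
  classical
  simp only [IsRegularOfDegree, ← e.toEquiv.forall_congr_right, Sum.forall]
  simp [Iso.degree_eq, degree_sum_inl, degree_sum_inr]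

theorem not_isAcyclic_of_forall_two_le_degree [Fintype V] [Nonempty V] [DecidableRel G.Adj]
    (hG : ∀ v, 2 ≤ G.degree v) : ¬ G.IsAcyclic := by
  classical
  intro hac
  let c := G.connectedComponentMk (Classical.arbitrary V)
  have degree_eq (w : c.supp) : (G.induce c.supp).degree w = G.degree w :=
    degree_induce_of_neighborSet_subset fun u hu => (c.mem_supp_congr_adj hu).mp w.2
  have two_le_degree (w : c.supp) : 2 ≤ (G.induce c.supp).degree w := degree_eq w ▸ hG w
  have : Nontrivial c.supp :=
    nontrivial_of_degree_ne_zero (pos_of_gt (two_le_degree ⟨_, rfl⟩)).ne'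
  have isTree : (G.induce c.supp).IsTree := hac.isTree_connectedComponent c
  obtain ⟨w, hw⟩ := isTree.exists_vert_degree_one_of_nontrivial
  exact absurd (two_le_degree w) (by simp [hw])

theorem image_neighborSet_of_degree_le [LocallyFinite G] [LocallyFinite H] (f : Copy H G) {w : W}
    (hw : G.degree (f w) ≤ H.degree w) : f '' H.neighborSet w = G.neighborSet (f w) := by
  refine Set.eq_of_subset_of_ncard_le ?_ ?_ (Set.toFinite _)
  · rintro _ ⟨u, hu, rfl⟩
    exact f.toHom.map_adj hu
  · have f_injective : Function.Injective f := f.injective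
    rwa [Set.ncard_image_of_injective _ f_injective, Set.ncard_eq_toFinset_card',
      Set.ncard_eq_toFinset_card']

theorem nonempty_iso_sum_induce_compl_range [LocallyFinite G] [LocallyFinite H] (f : Copy H G)
    (hf : ∀ w, G.degree (f w) ≤ H.degree w) :
    Nonempty (H ⊕g G.induce (Set.range f)ᶜ ≃g G) := by
  classical
  have f_injective : Function.Injective f := f.injective
  have adj_iff (w : W) (v : V) : G.Adj (f w) v ↔ ∃ u, H.Adj w u ∧ f u = v := by
    rw [← mem_neighborSet, ← image_neighborSet_of_degree_le f (hf w), Set.mem_image]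
    simp only [mem_neighborSet]
  have not_adj (w : W) (v : ↥(Set.range f)ᶜ) : ¬ G.Adj (f w) v := fun h =>
    have ⟨u, _, hu⟩ := (adj_iff w v).mp h
    v.2 ⟨u, hu⟩
  refine ⟨⟨((Equiv.ofInjective f f_injective).sumCongr (Equiv.refl _)).trans
    (Equiv.Set.sumCompl _), ?_⟩⟩
  rintro (w | v) (w' | v')
  · simp [adj_iff, f_injective.eq_iff]
  · simp [not_adj]
  · simp [not_adj, G.adj_comm v]
  · simp

theorem exists_nonempty_iso_cycleGraph_sum [Fintype V] [Nonempty V] [DecidableRel G.Adj]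
    (hG : G.IsRegularOfDegree 2) :
    ∃ n ≥ 3, ∃ s : Set V, Nonempty (cycleGraph n ⊕g G.induce s ≃g G) := by
  obtain ⟨n, hn, ⟨f⟩⟩ : ∃ n ≥ 3, cycleGraph n ⊑ G := by
    have := not_isAcyclic_of_forall_two_le_degree fun v => (hG v).ge
    simpa only [isAcyclic_iff_free_cycleGraph, not_forall, not_free, exists_prop] using this
  obtain ⟨k, rfl⟩ := Nat.exists_eq_add_of_le' hn
  exact ⟨_, hn, _, nonempty_iso_sum_induce_compl_range f fun w => by
    rw [hG.degree_eq, cycleGraph_degree_three_le]⟩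

end RegularGraph

section CyclePartition

open SimpleGraph

theorem exists_multiset_permanent_closedNbhdMatrix_eq_prod (R : Type*) [CommSemiring R]
    {V : Type*} [Fintype V] [DecidableEq V] {G : SimpleGraph V} [DecidableRel G.Adj]
    (hG : G.IsRegularOfDegree 2) :
    ∃ L : Multiset ℕ, (∀ p ∈ L, 3 ≤ p) ∧ L.sum = Fintype.card V ∧
      (L.map fun p => (closedNbhdMatrix R (cycleGraph p)).permanent).prod =
        (closedNbhdMatrix R G).permanent := by
  classical
  induction hN : Fintype.card V using Nat.strong_induction_on generalizing V with
  | _ N ih =>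
    cases isEmpty_or_nonempty V
    · exact ⟨0, by simp, by simp [← hN], by simp [permanent_isEmpty]⟩
    obtain ⟨n, hn, s, ⟨e⟩⟩ := exists_nonempty_iso_cycleGraph_sum hG
    have card_eq : n + Fintype.card s = N := by
      rw [← hN, ← e.card_eq, Fintype.card_sum, Fintype.card_fin]
    obtain ⟨L, three_le, sum_eq, prod_eq⟩ :=
      ih _ (by omega) ((isRegularOfDegree_iff_of_iso_sum e).mp hG).2 rfl
    refine ⟨n ::ₘ L, by simpa [hn] using three_le, ?_, ?_⟩
    · rw [Multiset.sum_cons, sum_eq, card_eq]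
    · rw [Multiset.map_cons, Multiset.prod_cons, prod_eq, permanent_closedNbhdMatrix_of_iso_sum R e]

theorem exists_isRegularOfDegree_two_permanent_closedNbhdMatrix_eq_prod (R : Type*)
    [CommSemiring R] (L : Multiset ℕ) (hL : ∀ p ∈ L, 3 ≤ p) :
    ∃ (G : SimpleGraph (Fin L.sum)) (_ : DecidableRel G.Adj), G.IsRegularOfDegree 2 ∧
      (closedNbhdMatrix R G).permanent =
        (L.map fun p => (closedNbhdMatrix R (cycleGraph p)).permanent).prod := by
  classical
  induction L using Multiset.induction with
  | empty =>
    have : IsEmpty (Fin (Multiset.sum (0 : Multiset ℕ))) := by simpa using Fin.isEmpty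
    exact ⟨⊥, inferInstance, .of_isEmpty, permanent_isEmpty⟩
  | cons p L ih =>
    obtain ⟨G, _, hG, prod_eq⟩ := ih fun q hq => hL q (Multiset.mem_cons_of_mem hq)
    obtain ⟨k, rfl⟩ := Nat.exists_eq_add_of_le' (hL p (Multiset.mem_cons_self p L))
    let e : Fin (k + 3) ⊕ Fin L.sum ≃ Fin ((k + 3) ::ₘ L).sum :=
      finSumFinEquiv.trans (finCongr (Multiset.sum_cons _ _).symm)
    let f := Iso.map e (cycleGraph (k + 3) ⊕g G)
    refine ⟨(cycleGraph (k + 3) ⊕g G).map e, inferInstance, (isRegularOfDegree_iff_of_iso_sum f).mpr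
      ⟨fun _ => cycleGraph_degree_three_le, hG⟩, ?_⟩
    rw [permanent_closedNbhdMatrix_of_iso_sum R f, prod_eq, Multiset.map_cons, Multiset.prod_cons]

end CyclePartition

theorem mem_LambdaHat3_iff {n : ℕ} {A : Matrix (Fin n) (Fin n) ℤ} :
    A ∈ LambdaHat3 n ↔ ∃ (G : SimpleGraph (Fin n)) (_ : DecidableRel G.Adj),
      G.IsRegularOfDegree 2 ∧ closedNbhdMatrix ℤ G = A := by
  constructor
  · rintro ⟨zero_or_one, row_sum, -, symm, diag⟩
    have isAdjMatrix : (A - 1).IsAdjMatrix :=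
      { zero_or_one := fun i j => by
          rcases eq_or_ne i j with rfl | hij
          · simp [diag]
          · simpa [one_apply_ne hij] using zero_or_one i j
        symm := symm.sub isSymm_one
        apply_diag := fun i => by simp [diag] }
    have closedNbhdMatrix_eq : closedNbhdMatrix ℤ isAdjMatrix.toGraph = A := by
      rw [closedNbhdMatrix, isAdjMatrix.adjMatrix_toGraph_eq, add_sub_cancel]
    refine ⟨isAdjMatrix.toGraph, inferInstance, fun i => ?_, closedNbhdMatrix_eq⟩
    have := sum_closedNbhdMatrix_row ℤ (G := isAdjMatrix.toGraph) i
    rw [closedNbhdMatrix_eq, row_sum] at this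
    omega
  · rintro ⟨G, _, hG, rfl⟩
    have row_sum (i) : ∑ j, closedNbhdMatrix ℤ G i j = 3 := by
      rw [sum_closedNbhdMatrix_row, hG.degree_eq]
      norm_num
    refine ⟨fun i j => ?_, row_sum, fun j => ?_, isSymm_closedNbhdMatrix ℤ, fun i => ?_⟩
    · rw [closedNbhdMatrix_apply]
      split_ifs <;> simp
    · simpa only [(isSymm_closedNbhdMatrix ℤ).apply] using row_sum j
    · simp [closedNbhdMatrix_apply]

theorem permanent_closedNbhdMatrix_cycleGraph_eq_of_recurrence {a : ℕ → ℤ} (ha3 : a 3 = 6)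
    (ha4 : a 4 = 9) (ha : ∀ m : ℕ, 5 ≤ m → a m = a (m - 1) + a (m - 2) - 2) (k : ℕ) :
    (closedNbhdMatrix ℤ (SimpleGraph.cycleGraph (k + 3))).permanent = a (k + 3) := by
  rw [permanent_closedNbhdMatrix_cycleGraph]
  induction k using Nat.twoStepInduction with
  | zero => simp [ha3, Nat.fib_add_two]
  | one => simp [ha4, Nat.fib_add_two]
  | more k ih₀ ih₁ =>
    rw [ha _ (by omega), show k + 2 + 3 - 1 = k + 1 + 3 by omega,
      show k + 2 + 3 - 2 = k + 3 by omega, ← ih₀, ← ih₁, Nat.fib_add_two (n := k + 3),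
      Nat.fib_add_two (n := k + 2)]
    push_cast
    ring

theorem stmt_0 (n : ℕ) (hn : 3 ≤ n) (a : ℕ → ℤ)
    (ha3 : a 3 = 6) (ha4 : a 4 = 9)
    (ha : ∀ m : ℕ, 5 ≤ m → a m = a (m - 1) + a (m - 2) - 2) :
    {x : ℤ | ∃ A ∈ LambdaHat3 n, A.permanent = x} =
      {x : ℤ | ∃ L : Multiset ℕ, (∀ p ∈ L, 3 ≤ p) ∧ L.sum = n ∧ (L.map a).prod = x} := by
  have map_eq {L : Multiset ℕ} (hL : ∀ p ∈ L, 3 ≤ p) :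
      L.map (fun p => (closedNbhdMatrix ℤ (SimpleGraph.cycleGraph p)).permanent) = L.map a :=
    Multiset.map_congr rfl fun p hp => by
      obtain ⟨k, rfl⟩ := Nat.exists_eq_add_of_le' (hL p hp)
      exact permanent_closedNbhdMatrix_cycleGraph_eq_of_recurrence ha3 ha4 ha k
  ext x
  constructor
  · rintro ⟨A, hA, rfl⟩
    obtain ⟨G, _, hG, rfl⟩ := mem_LambdaHat3_iff.mp hA
    obtain ⟨L, hL, sum_eq, prod_eq⟩ := exists_multiset_permanent_closedNbhdMatrix_eq_prod ℤ hG
    exact ⟨L, hL, sum_eq.trans (Fintype.card_fin n), by rw [← prod_eq, map_eq hL]⟩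
  · rintro ⟨L, hL, rfl, rfl⟩
    obtain ⟨G, _, hG, prod_eq⟩ :=
      exists_isRegularOfDegree_two_permanent_closedNbhdMatrix_eq_prod ℤ L hL
    exact ⟨_, mem_LambdaHat3_iff.mpr ⟨G, inferInstance, hG, rfl⟩, by rw [prod_eq, map_eq hL]⟩
end

section
/- Let α, β, γ be real numbers satisfying the triangle inequalities 0 ≤ α ≤ β + γ and 0 ≤ γ ≤ α + β. Put a3 = α³+β³+γ³+3αβγ and a4 = α⁴+β⁴+γ⁴+4αβ²γ+2α²γ², and assume in addition that a4³ ≤ a3⁴ and αγ + β·a3^{1/3} ≤ a3^{2/3}. Then for every integer n ≥ 3 divisible by 3, the maximum of per A over A ∈ Λ̂_n(α,β,γ) equals a3^{n/3}. -/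
open Matrix

/-- `Λ̂_n(α,β,γ)`: matrices `α·Sᵀ + β·I + γ·S` where `S` is the permutation matrix of a
permutation of `{1,…,n}` all of whose cycles have length at least 3 (note `Sᵀ = S⁻¹`). -/
def LambdaHat (n : ℕ) (α β γ : ℝ) : Set (Matrix (Fin n) (Fin n) ℝ) :=
  {A | ∃ s : Equiv.Perm (Fin n), (∀ x, s x ≠ x ∧ s (s x) ≠ x) ∧
    A = α • ((s⁻¹).permMatrix ℝ) + β • (1 : Matrix (Fin n) (Fin n) ℝ) + γ • (s.permMatrix ℝ)}

/-!
A permutation contributing to the permanent of `α • s⁻¹ + β • 1 + γ • s` moves every point by at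
most one step along its cycle of `s`, so it is described by recording, for each edge of the cycles
of `s`, in which directions it is used. The permanent thereby becomes a transfer-matrix sum, equal
to the product of `tr (T ^ k)` over the cycle lengths `k` of `s`, where `T` is a 4 × 4 matrix with
`tr (T ^ k) = α ^ k + γ ^ k + tr (P ^ k)` and `P = !![β, α; γ, 0]`. By Cayley-Hamilton
`tr (P ^ (k + 2)) = β * tr (P ^ (k + 1)) + α * γ * tr (P ^ k)`, and by the triangle inequalities the
powers of `α` and of `γ` satisfy the same recurrence with `≤`. Since `tr (T ^ 3) = a3` and
`tr (T ^ 4) = a4`, the remaining hypotheses propagate the bound `tr (T ^ k) ≤ a3 ^ (k / 3)` from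
`k = 3, 4` to all `k ≥ 3`; it is attained by the permutations all of whose cycles have length 3.
-/

section CycleLengths

lemma minimalPeriod_eq_card_of_isCycleOn {V : Type*} {s : Equiv.Perm V} {c : Finset V}
    (hs : s.IsCycleOn c) {x : V} (hx : x ∈ c) : Function.minimalPeriod s x = c.card := by
  have period_iff (k : ℕ) : Function.minimalPeriod s x ∣ k ↔ c.card ∣ k := by
    rw [← Function.isPeriodicPt_iff_minimalPeriod_dvd, ← hs.pow_apply_eq hx, Function.IsPeriodicPt,
      Equiv.Perm.iterate_eq_pow, Function.IsFixedPt]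
  exact Nat.dvd_antisymm ((period_iff _).mpr dvd_rfl) ((period_iff _).mp dvd_rfl)

variable {V : Type*} [Fintype V] [DecidableEq V]

open Equiv.Perm in
lemma mem_parts_partition_iff {s : Equiv.Perm V} {k : ℕ} :
    k ∈ s.partition.parts ↔ ∃ x, Function.minimalPeriod s x = k := by
  have minimalPeriod_of_mem {c : Equiv.Perm V} (hc : c ∈ s.cycleFactorsFinset) {x : V}
      (hx : x ∈ c.support) : Function.minimalPeriod s x = c.support.card :=
    minimalPeriod_eq_card_of_isCycleOn (isCycleOn_support_of_mem_cycleFactorsFinset hc) hx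
  rw [parts_partition, Multiset.mem_add, cycleType_def, Multiset.mem_map, Multiset.mem_replicate,
    ← Finset.card_compl]
  constructor
  · rintro (⟨c, hc, rfl⟩ | ⟨hne, rfl⟩)
    · obtain ⟨x, hx⟩ := (mem_cycleFactorsFinset_iff.mp hc).1.nonempty_support
      exact ⟨x, minimalPeriod_of_mem hc hx⟩
    · obtain ⟨x, hx⟩ := Finset.card_ne_zero.mp hne
      have hx : s x = x := notMem_support.mp (Finset.mem_compl.mp hx)
      exact ⟨x, Function.minimalPeriod_eq_one_iff_isFixedPt.mpr hx⟩
  · rintro ⟨x, rfl⟩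
    by_cases hx : x ∈ s.support
    · have hc := cycleOf_mem_cycleFactorsFinset_iff.mpr hx
      have hxc : x ∈ (s.cycleOf x).support := by rwa [mem_support_cycleOf_iff, and_iff_right .rfl]
      exact .inl ⟨_, hc, (minimalPeriod_of_mem hc hxc).symm⟩
    · refine .inr ⟨Finset.card_ne_zero_of_mem (Finset.mem_compl.mpr hx), ?_⟩
      exact Function.minimalPeriod_eq_one_iff_isFixedPt.mpr (notMem_support.mp hx)

lemma forall_parts_partition_three_le_iff {s : Equiv.Perm V} :
    (∀ k ∈ s.partition.parts, 3 ≤ k) ↔ ∀ x, s x ≠ x ∧ s (s x) ≠ x := by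
  simp only [mem_parts_partition_iff, forall_exists_index, forall_apply_eq_imp_iff]
  refine forall_congr' fun x => ?_
  have period_pos : 0 < Function.minimalPeriod s x :=
    Function.minimalPeriod_pos_of_mem_periodicPts (s.injective.mem_periodicPts x)
  have fixed_iff : s x = x ↔ Function.minimalPeriod s x ∣ 1 :=
    Function.isPeriodicPt_iff_minimalPeriod_dvd (n := 1)
  have fixed_two_iff : s (s x) = x ↔ Function.minimalPeriod s x ∣ 2 :=
    Function.isPeriodicPt_iff_minimalPeriod_dvd (n := 2)
  rw [Ne, Ne, fixed_iff, fixed_two_iff, Nat.dvd_prime Nat.prime_two, Nat.dvd_one]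
  lia

lemma exists_parts_partition_eq {p : Multiset ℕ} (hsum : p.sum = Fintype.card V)
    (hpos : ∀ k ∈ p, 0 < k) : ∃ s : Equiv.Perm V, s.partition.parts = p := by
  have split : p.filter (2 ≤ ·) + Multiset.replicate (p.count 1) 1 = p := by
    conv_rhs => rw [← Multiset.filter_add_not (2 ≤ ·) p]
    rw [← Multiset.filter_eq']
    congr 1
    refine Multiset.filter_congr fun k hk => ?_
    have := hpos k hk
    lia
  have split_sum := congrArg Multiset.sum split
  rw [Multiset.sum_add, Multiset.sum_replicate, smul_eq_mul, mul_one, hsum] at split_sum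
  obtain ⟨s, hs⟩ := (Equiv.Perm.exists_with_cycleType_iff V (m := p.filter (2 ≤ ·))).mpr
    ⟨by lia, fun k hk => Multiset.of_mem_filter hk⟩
  refine ⟨s, ?_⟩
  rw [Equiv.Perm.parts_partition, ← s.sum_cycleType, hs, ← split_sum, Nat.add_sub_cancel_left,
    split]

end CycleLengths

/-- Partition function of the states `e : V → S` along the cycles of `s`, with weight
`M (e v) (e (s v))` on the step from `v` to `s v`. -/
def cyclicSum {V S R : Type*} [Fintype V] [DecidableEq V] [Fintype S] [CommSemiring R]
    (M : Matrix S S R) (s : Equiv.Perm V) : R :=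
  ∑ e : V → S, ∏ v, M (e v) (e (s v))

section CyclicSum

variable {V W ι S R : Type*} [Fintype V] [DecidableEq V] [Fintype W] [DecidableEq W]
  [Fintype ι] [DecidableEq ι] [Fintype S] [CommSemiring R] (M : Matrix S S R)

lemma cyclicSum_eq_of_semiconj (f : V ≃ W) {s : Equiv.Perm V} {r : Equiv.Perm W}
    (h : Function.Semiconj f s r) : cyclicSum M s = cyclicSum M r := by
  refine Fintype.sum_equiv (f.arrowCongr (Equiv.refl S)) _ _ fun e => ?_
  refine Fintype.prod_equiv f _ _ fun v => ?_
  simp [← h.eq]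

lemma cyclicSum_one : cyclicSum M (1 : Equiv.Perm V) = M.trace ^ Fintype.card V := by
  simp only [cyclicSum, Equiv.Perm.one_apply, ← Fintype.piFinset_univ]
  exact (Finset.prod_univ_sum (fun _ => Finset.univ) fun _ a => M a a).symm.trans
    (Finset.prod_const _)

lemma cyclicSum_subtypePerm_of_fixed {s : Equiv.Perm V} {p : V → Prop} [DecidablePred p]
    (hp : ∀ v, p (s v) ↔ p v) (hfix : ∀ v, p v → s v = v) :
    cyclicSum M (s.subtypePerm hp) = M.trace ^ Fintype.card {v // p v} := by
  rw [← cyclicSum_one]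
  congr 1
  ext v
  exact hfix v v.2

lemma cyclicSum_eq_prod_fiber {s : Equiv.Perm V} {f : V → ι} (hf : ∀ v, f (s v) = f v) :
    cyclicSum M s =
      ∏ i, cyclicSum M (s.subtypePerm (p := fun v => f v = i) fun v => by rw [hf]) := by
  let fiberwise : (V → S) ≃ ∀ i, {v // f v = i} → S :=
    ((Equiv.sigmaFiberEquiv f).symm.arrowCongr (Equiv.refl S)).trans (Equiv.piCurry fun _ _ => S)
  simp only [cyclicSum, Finset.prod_univ_sum, Fintype.piFinset_univ]
  refine Fintype.sum_equiv fiberwise _ _ fun e => ?_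
  rw [← Fintype.prod_fiberwise f]
  rfl

variable [DecidableEq S]

lemma sum_prod_castSucc_succ_eq_trace (N : Matrix S S R) (k : ℕ) :
    ∑ e : Fin (k + 1) → S, (∏ i : Fin k, M (e i.castSucc) (e i.succ)) * N (e (Fin.last k)) (e 0) =
      (M ^ k * N).trace := by
  induction k generalizing N with
  | zero =>
    rw [pow_zero, one_mul]
    exact Fintype.sum_equiv (Equiv.funUnique (Fin 1) S) _ _ fun e => by simp
  | succ k ih =>
    rw [pow_succ, mul_assoc, ← ih, ← (Fin.snocEquiv fun _ => S).sum_comp,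
      Fintype.sum_prod_type_right]
    refine Fintype.sum_congr _ _ fun e => ?_
    simp only [Fin.snocEquiv_apply, Fin.prod_univ_castSucc, Fin.snoc_castSucc, Fin.succ_last,
      ← Fin.castSucc_succ, Fin.snoc_last, ← Fin.castSucc_zero, mul_apply, Finset.mul_sum, mul_assoc]

lemma cyclicSum_finRotate (k : ℕ) : cyclicSum M (finRotate (k + 1)) = (M ^ (k + 1)).trace := by
  rw [pow_succ, ← sum_prod_castSucc_succ_eq_trace]
  simp only [cyclicSum, Fin.prod_univ_castSucc, finRotate_apply, Fin.coeSucc_eq_succ,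
    Fin.last_add_one]

lemma cyclicSum_of_isCycleOn_univ [Nonempty V] {s : Equiv.Perm V} (hs : s.IsCycleOn Set.univ) :
    cyclicSum M s = (M ^ Fintype.card V).trace := by
  obtain ⟨x⟩ := ‹Nonempty V›
  obtain ⟨k, hk⟩ := Nat.exists_eq_succ_of_ne_zero (Fintype.card_ne_zero (α := V))
  rw [← Finset.coe_univ] at hs
  have pow_eq_iff {i j : ℕ} : (s ^ i) x = (s ^ j) x ↔ i ≡ j [MOD k + 1] := by
    rw [hs.pow_apply_eq_pow_apply (Finset.mem_univ x), Finset.card_univ, hk]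
  have orbit_bijective : Function.Bijective fun i : Fin (k + 1) => (s ^ (i : ℕ)) x := by
    refine (Fintype.bijective_iff_injective_and_card _).mpr ⟨fun i j hij => ?_, by simp [hk]⟩
    exact Fin.ext ((pow_eq_iff.mp hij).eq_of_lt_of_lt i.isLt j.isLt)
  rw [hk, ← cyclicSum_finRotate]
  refine (cyclicSum_eq_of_semiconj M (Equiv.ofBijective _ orbit_bijective) fun i => ?_).symm
  simp only [Equiv.ofBijective_apply]
  rw [← Equiv.Perm.mul_apply, ← pow_succ', pow_eq_iff, finRotate_apply]
  simp [Nat.ModEq, Fin.val_add]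

lemma cyclicSum_subtypePerm_of_isCycleOn {s : Equiv.Perm V} {p : V → Prop} [DecidablePred p]
    (hp : ∀ v, p (s v) ↔ p v) (hs : s.IsCycleOn {v | p v}) (hne : ∃ v, p v) :
    cyclicSum M (s.subtypePerm hp) = (M ^ Fintype.card {v // p v}).trace :=
  have : Nonempty {v // p v} := nonempty_subtype.mpr hne
  cyclicSum_of_isCycleOn_univ M hs.subtypePerm

open Equiv.Perm in
lemma cyclicSum_subtypePerm_cycleOf_eq {s c : Equiv.Perm V} (hc : c ∈ s.cycleFactorsFinset)
    (hp : ∀ v, s.cycleOf (s v) = c ↔ s.cycleOf v = c) :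
    cyclicSum M (s.subtypePerm (p := fun v => s.cycleOf v = c) hp) =
      (M ^ c.support.card).trace := by
  have mem_support_iff (v : V) : v ∈ c.support ↔ s.cycleOf v = c := by
    rw [← eq_cycleOf_of_mem_cycleFactorsFinset_iff s c hc, eq_comm]
  have isCycleOn : s.IsCycleOn {v | s.cycleOf v = c} := by
    simpa only [← mem_support_iff] using! isCycleOn_support_of_mem_cycleFactorsFinset hc
  obtain ⟨v, hv⟩ := (mem_cycleFactorsFinset_iff.mp hc).1.nonempty_support
  rw [← Fintype.card_of_subtype _ mem_support_iff]
  exact cyclicSum_subtypePerm_of_isCycleOn M hp isCycleOn ⟨v, (mem_support_iff v).mp hv⟩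

open Equiv.Perm in
theorem cyclicSum_eq_prod_partition (s : Equiv.Perm V) :
    cyclicSum M s = (s.partition.parts.map fun k => (M ^ k).trace).prod := by
  have invariant (c : Equiv.Perm V) (v : V) : s.cycleOf (s v) = c ↔ s.cycleOf v = c := by
    rw [cycleOf_self_apply]
  let fiberSum (c : Equiv.Perm V) : R :=
    cyclicSum M (s.subtypePerm (p := fun v => s.cycleOf v = c) (invariant c))
  have fiberSum_one : fiberSum 1 = M.trace ^ (Fintype.card V - s.support.card) := by
    have mem_compl_iff (v : V) : v ∈ s.supportᶜ ↔ s.cycleOf v = 1 := by simp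
    rw [← Finset.card_compl, ← Fintype.card_of_subtype _ mem_compl_iff]
    exact cyclicSum_subtypePerm_of_fixed M _ fun v => (cycleOf_eq_one_iff s).mp
  have fiberSum_cycle (c : Equiv.Perm V) (hc : c ∈ s.cycleFactorsFinset) :
      fiberSum c = (M ^ c.support.card).trace :=
    cyclicSum_subtypePerm_cycleOf_eq M hc (invariant c)
  have fiberSum_of_notMem (c : Equiv.Perm V) (hc : c ∉ insert 1 s.cycleFactorsFinset) :
      fiberSum c = 1 := by
    rw [Finset.mem_insert, not_or] at hc
    have : IsEmpty {v // s.cycleOf v = c} := Subtype.isEmpty_of_false fun v hv =>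
      hc.2 (hv ▸ cycleOf_ne_one_iff_mem_cycleFactorsFinset.mp (hv ▸ hc.1))
    simp [fiberSum, cyclicSum]
  have one_notMem : 1 ∉ s.cycleFactorsFinset :=
    fun h => (mem_cycleFactorsFinset_iff.mp h).1.ne_one rfl
  calc
    cyclicSum M s = ∏ c, fiberSum c := cyclicSum_eq_prod_fiber M s.cycleOf_self_apply
    _ = ∏ c ∈ insert 1 s.cycleFactorsFinset, fiberSum c :=
      (Finset.prod_subset (Finset.subset_univ _) fun c _ => fiberSum_of_notMem c).symm
    _ = M.trace ^ (Fintype.card V - s.support.card) *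
          ∏ c ∈ s.cycleFactorsFinset, (M ^ c.support.card).trace := by
      rw [Finset.prod_insert one_notMem, fiberSum_one, Finset.prod_congr rfl fiberSum_cycle]
    _ = (s.partition.parts.map fun k => (M ^ k).trace).prod := by
      simp [parts_partition, cycleType_def, mul_comm]

end CyclicSum

section LinearRecurrence

lemma le_pow_of_le_linear_recurrence {R : Type*} [CommSemiring R] [PartialOrder R] [IsOrderedRing R]
    {a : ℕ → R} {b c t : R} {N : ℕ} (hb : 0 ≤ b) (hc : 0 ≤ c) (ht : 0 ≤ t)
    (hrec : ∀ k, a (k + 2) ≤ b * a (k + 1) + c * a k) (hbct : c + b * t ≤ t ^ 2)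
    (h0 : a N ≤ t ^ N) (h1 : a (N + 1) ≤ t ^ (N + 1)) {k : ℕ} (hk : N ≤ k) : a k ≤ t ^ k := by
  suffices a k ≤ t ^ k ∧ a (k + 1) ≤ t ^ (k + 1) from this.1
  induction k, hk using Nat.le_induction with
  | base => exact ⟨h0, h1⟩
  | succ k _ ih =>
    refine ⟨ih.2, ?_⟩
    calc a (k + 2) ≤ b * a (k + 1) + c * a k := hrec k
      _ ≤ b * t ^ (k + 1) + c * t ^ k := by gcongr; exacts [ih.2, ih.1]
      _ = (c + b * t) * t ^ k := by ring
      _ ≤ t ^ 2 * t ^ k := by gcongr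
      _ = t ^ (k + 2) := by ring

lemma prod_map_le_pow_sum {R : Type*} [CommSemiring R] [PartialOrder R] [IsOrderedRing R]
    {a : ℕ → R} {t : R} {p : Multiset ℕ} (ha : ∀ k ∈ p, 0 ≤ a k) (hat : ∀ k ∈ p, a k ≤ t ^ k) :
    (p.map a).prod ≤ t ^ p.sum := by
  refine (Multiset.prod_map_le_prod_map₀ a (t ^ ·) ha hat).trans_eq ?_
  induction p using Multiset.induction <;> simp_all [pow_add]

end LinearRecurrence

section EdgeTransfer

/-- Transfer matrix of the states of the edges of a directed cycle under a permutation moving every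
point by at most one step. The two bits of the state of `v → s v` record whether `v` moves to `s v`
and whether `s v` moves to `v`. The entry at `p`, `q` is the weight of a vertex with incoming edge
in state `p` and outgoing edge in state `q`: `α` if it moves forwards, `γ` if it moves backwards,
`β` if it is fixed, and `0` if no permutation produces these states. -/
def edgeTransfer {R : Type*} [Zero R] (α β γ : R) : Matrix (Bool × Bool) (Bool × Bool) R
  | (true, false), (true, false) => α
  | (false, true), (false, true) => γ
  | (false, false), (false, false) => β
  | (false, false), (true, true) => α
  | (true, true), (false, false) => γ
  | _, _ => 0

/-- Splits the edge states into `(1, 0)`, `(0, 1)`, which can only repeat, and `(0, 0)`, `(1, 1)`,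
so that `edgeTransfer` becomes block diagonal. -/
noncomputable def edgeStateEquiv : Fin 2 ⊕ Fin 2 ≃ Bool × Bool :=
  Equiv.ofBijective (Sum.elim ![(true, false), (false, true)] ![(false, false), (true, true)])
    (by decide)

variable {R : Type*} [CommSemiring R] (α β γ : R)

lemma reindex_edgeTransfer :
    reindexAlgEquiv ℕ R edgeStateEquiv (fromBlocks (diagonal ![α, γ]) 0 0 !![β, α; γ, 0]) =
      edgeTransfer α β γ := by
  rw [coe_reindexAlgEquiv, ← Equiv.eq_symm_apply]
  ext (i | i) (j | j) <;> fin_cases i <;> fin_cases j <;> rfl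

lemma trace_edgeTransfer_pow (k : ℕ) :
    (edgeTransfer α β γ ^ k).trace = α ^ k + γ ^ k + (!![β, α; γ, 0] ^ k).trace := by
  rw [← reindex_edgeTransfer, ← map_pow, fromBlocks_diagonal_pow, diagonal_pow]
  simp [trace, ← edgeStateEquiv.sum_comp]

lemma trace_edgeTransfer_pow_three :
    (edgeTransfer α β γ ^ 3).trace = α ^ 3 + β ^ 3 + γ ^ 3 + 3 * α * β * γ := by
  simp only [trace_edgeTransfer_pow, pow_succ !![β, α; γ, 0], pow_zero, one_mul, mul_fin_two,
    trace_fin_two_of]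
  ring

lemma trace_edgeTransfer_pow_four :
    (edgeTransfer α β γ ^ 4).trace =
      α ^ 4 + β ^ 4 + γ ^ 4 + 4 * α * β ^ 2 * γ + 2 * α ^ 2 * γ ^ 2 := by
  simp only [trace_edgeTransfer_pow, pow_succ !![β, α; γ, 0], pow_zero, one_mul, mul_fin_two,
    trace_fin_two_of]
  ring

lemma trace_pow_add_two_fin_two (k : ℕ) :
    (!![β, α; γ, 0] ^ (k + 2)).trace =
      β * (!![β, α; γ, 0] ^ (k + 1)).trace + α * γ * (!![β, α; γ, 0] ^ k).trace := by
  have sq_eq : !![β, α; γ, 0] ^ 2 = β • !![β, α; γ, 0] + (α * γ) • 1 := by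
    ext i j
    fin_cases i <;> fin_cases j <;> simp [sq, mul_comm]
  rw [pow_add, sq_eq, mul_add, mul_smul_comm, mul_smul_comm, ← pow_succ, mul_one, trace_add,
    trace_smul, trace_smul, smul_eq_mul, smul_eq_mul]

variable [PartialOrder R] {α β γ}

lemma edgeTransfer_nonneg (hα : 0 ≤ α) (hβ : 0 ≤ β) (hγ : 0 ≤ γ) (p q : Bool × Bool) :
    0 ≤ edgeTransfer α β γ p q := by
  unfold edgeTransfer
  split <;> first | assumption | rfl

variable [IsOrderedRing R]

lemma trace_edgeTransfer_pow_nonneg (hα : 0 ≤ α) (hβ : 0 ≤ β) (hγ : 0 ≤ γ) (k : ℕ) :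
    0 ≤ (edgeTransfer α β γ ^ k).trace :=
  Finset.sum_nonneg fun p _ => pow_apply_nonneg (edgeTransfer_nonneg hα hβ hγ) k p p

lemma trace_edgeTransfer_pow_add_two_le (hα : 0 ≤ α) (hαβγ : α ≤ β + γ) (hγ : 0 ≤ γ)
    (hγαβ : γ ≤ α + β) (k : ℕ) :
    (edgeTransfer α β γ ^ (k + 2)).trace ≤
      β * (edgeTransfer α β γ ^ (k + 1)).trace + α * γ * (edgeTransfer α β γ ^ k).trace := by
  have pow_add_two_le {x y : R} (hx : 0 ≤ x) (hxy : x ≤ β + y) :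
      x ^ (k + 2) ≤ β * x ^ (k + 1) + x * y * x ^ k :=
    calc x ^ (k + 2) = x * x ^ (k + 1) := pow_succ' x (k + 1)
      _ ≤ (β + y) * x ^ (k + 1) := by gcongr
      _ = β * x ^ (k + 1) + x * y * x ^ k := by ring
  simp only [trace_edgeTransfer_pow, trace_pow_add_two_fin_two]
  calc
    _ ≤ (β * α ^ (k + 1) + α * γ * α ^ k) + (β * γ ^ (k + 1) + γ * α * γ ^ k) + _ := by
      gcongr
      exacts [pow_add_two_le hα hαβγ, pow_add_two_le hγ (hγαβ.trans_eq (add_comm α β))]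
    _ = _ := by ring

theorem trace_edgeTransfer_pow_le {t : R} (hα : 0 ≤ α) (hβ : 0 ≤ β) (hγ : 0 ≤ γ)
    (hαβγ : α ≤ β + γ) (hγαβ : γ ≤ α + β) (ht : 0 ≤ t) (hβt : α * γ + β * t ≤ t ^ 2)
    (h3 : α ^ 3 + β ^ 3 + γ ^ 3 + 3 * α * β * γ ≤ t ^ 3)
    (h4 : α ^ 4 + β ^ 4 + γ ^ 4 + 4 * α * β ^ 2 * γ + 2 * α ^ 2 * γ ^ 2 ≤ t ^ 4)
    {k : ℕ} (hk : 3 ≤ k) : (edgeTransfer α β γ ^ k).trace ≤ t ^ k :=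
  le_pow_of_le_linear_recurrence (a := fun k => (edgeTransfer α β γ ^ k).trace) hβ
    (mul_nonneg hα hγ) ht (trace_edgeTransfer_pow_add_two_le hα hαβγ hγ hγαβ) hβt
    ((trace_edgeTransfer_pow_three α β γ).trans_le h3)
    ((trace_edgeTransfer_pow_four α β γ).trans_le h4) hk

end EdgeTransfer

section EdgeStates

/-- The permutations `σ` moving every point by at most one step, forwards or backwards, along the
cycles of `s`. If the cycles of `s` have length at least 3, these are the permutations contributing
to the permanent of `cycleMatrix α β γ s`. -/
def IsNearestNeighbor {V : Type*} (s σ : Equiv.Perm V) : Prop :=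
  ∀ v, σ v = s v ∨ s (σ v) = v ∨ σ v = v

/-- The state of the edge `v → s v` under `σ`: the first bit records whether `σ` moves `v` to
`s v`, the second whether it moves `s v` back to `v`. -/
def edgeState {V : Type*} [DecidableEq V] (s σ : Equiv.Perm V) (v : V) : Bool × Bool :=
  (decide (σ v = s v), decide (σ (s v) = v))

/-- The map on vertices with prescribed edge states `e`, a left inverse of `edgeState s` on
nearest-neighbour permutations. -/
def moveAlong {V : Type*} (s : Equiv.Perm V) (e : V → Bool × Bool) (v : V) : V :=
  if (e v).1 then s v else if (e (s⁻¹ v)).2 then s⁻¹ v else v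

/-- Edge states `p` into and `q` out of a vertex are compatible if at most one arrow leaves the
vertex, at most one enters it, and one leaves exactly when one enters. -/
def EdgeCompatible (p q : Bool × Bool) : Prop :=
  ¬(q.1 ∧ p.2) ∧ ¬(p.1 ∧ q.2) ∧ ((q.1 ∨ p.2) ↔ (p.1 ∨ q.2))

variable {V : Type*} {s σ : Equiv.Perm V}

lemma IsNearestNeighbor.preimage_apply (hσ : IsNearestNeighbor s σ) (v : V) :
    σ v = s v ∨ σ (s (s v)) = s v ∨ σ (s v) = s v := by
  obtain ⟨u, hu⟩ := σ.surjective (s v)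
  rcases hσ u with h | h | h
  · exact .inl (s.injective (hu.symm.trans h) ▸ hu)
  · exact .inr (.inl (by rw [← hu, h, hu]))
  · exact .inr (.inr (by rw [← hu, h, h]))

lemma EdgeCompatible.swap {p q : Bool × Bool} (h : EdgeCompatible p q) :
    EdgeCompatible p.swap q.swap :=
  ⟨fun hqp => h.2.1 hqp.symm, fun hpq => h.1 hpq.symm, by
    simpa only [Prod.fst_swap, Prod.snd_swap, or_comm] using h.2.2.symm⟩

lemma edgeCompatible_of_edgeTransfer_ne_zero {R : Type*} [Zero R] {α β γ : R}
    {p q : Bool × Bool} (h : edgeTransfer α β γ p q ≠ 0) : EdgeCompatible p q := by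
  unfold edgeTransfer at h
  split at h <;> simp_all [EdgeCompatible]

lemma leftInverse_moveAlong {e : V → Bool × Bool} (he : ∀ v, EdgeCompatible (e v) (e (s v))) :
    Function.LeftInverse (moveAlong s (Prod.swap ∘ e)) (moveAlong s e) := by
  intro v
  by_cases forward : (e v).1
  · have := (he v).2.1
    simp_all [moveAlong]
  by_cases backward : (e (s⁻¹ v)).2
  · have := (he (s⁻¹ (s⁻¹ v))).2.1
    simp_all [moveAlong]
  · have := (he (s⁻¹ v)).2.2
    simp_all [moveAlong]

variable [DecidableEq V]

lemma moveAlong_edgeState (hσ : IsNearestNeighbor s σ) : moveAlong s (edgeState s σ) = σ := by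
  funext v
  rcases hσ v with h | h | h <;> grind [moveAlong, edgeState, Equiv.Perm.inv_def]

lemma edgeState_injOn : Set.InjOn (edgeState s) {σ | IsNearestNeighbor s σ} := fun σ hσ τ hτ h =>
  DFunLike.coe_injective <| by rw [← moveAlong_edgeState hσ, h, moveAlong_edgeState hτ]

lemma exists_isNearestNeighbor_edgeState_eq (hs : ∀ x, s x ≠ x ∧ s (s x) ≠ x)
    {e : V → Bool × Bool} (he : ∀ v, EdgeCompatible (e v) (e (s v))) :
    ∃ σ : Equiv.Perm V, IsNearestNeighbor s σ ∧ edgeState s σ = e := by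
  let σ : Equiv.Perm V := ⟨moveAlong s e, moveAlong s (Prod.swap ∘ e), leftInverse_moveAlong he,
    leftInverse_moveAlong (e := Prod.swap ∘ e) fun v => (he v).swap⟩
  have σ_apply (v : V) : σ v = moveAlong s e v := rfl
  refine ⟨σ, fun v => ?_, funext fun v => Prod.ext ?_ ?_⟩
  · rw [σ_apply, moveAlong]
    split_ifs <;> simp
  · have := (hs v).1.symm
    have : s⁻¹ v ≠ s v := fun h => (hs v).2 (by rw [← h]; exact s.apply_symm_apply v)
    simp only [edgeState, σ_apply, moveAlong]
    split_ifs <;> simp_all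
  · have := hs v
    have := (he v).1
    simp only [edgeState, σ_apply, moveAlong]
    split_ifs <;> simp_all

end EdgeStates

section Permanent

/-- The elements of `LambdaHat`, with entries in a commutative semiring and rows and columns
indexed by any type. -/
def cycleMatrix {V R : Type*} [DecidableEq V] [CommSemiring R] (α β γ : R) (s : Equiv.Perm V) :
    Matrix V V R :=
  α • (s⁻¹).permMatrix R + β • (1 : Matrix V V R) + γ • s.permMatrix R

variable {V R : Type*} [DecidableEq V] [CommSemiring R] {α β γ : R} {s σ : Equiv.Perm V}

lemma cycleMatrix_apply (hs : ∀ x, s x ≠ x ∧ s (s x) ≠ x) (i j : V) :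
    cycleMatrix α β γ s i j =
      if i = s j then α else if s i = j then γ else if i = j then β else 0 := by
  simp only [cycleMatrix, Matrix.add_apply, Matrix.smul_apply, PEquiv.toMatrix_apply,
    Equiv.toPEquiv_apply, Option.mem_some_iff, one_apply, smul_eq_mul, Equiv.Perm.inv_eq_iff_eq]
  rcases eq_or_ne i (s j) with rfl | backward
  · simp [hs j]
  rcases eq_or_ne (s i) j with rfl | forward
  · simp [backward, (hs i).1.symm]
  · simp [backward, forward]

lemma isNearestNeighbor_of_prod_ne_zero [Fintype V] (hs : ∀ x, s x ≠ x ∧ s (s x) ≠ x)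
    (h : ∏ v, cycleMatrix α β γ s (σ v) v ≠ 0) : IsNearestNeighbor s σ := by
  intro v
  have entry_ne_zero : cycleMatrix α β γ s (σ v) v ≠ 0 := fun h0 =>
    h (Finset.prod_eq_zero (Finset.mem_univ v) h0)
  rw [cycleMatrix_apply hs] at entry_ne_zero
  by_contra! hv
  simp [hv] at entry_ne_zero

lemma edgeTransfer_edgeState (hs : ∀ x, s x ≠ x ∧ s (s x) ≠ x) (hσ : IsNearestNeighbor s σ)
    (v : V) :
    edgeTransfer α β γ (edgeState s σ v) (edgeState s σ (s v)) =
      cycleMatrix α β γ s (σ (s v)) (s v) := by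
  have no_swap : σ v = s v → σ (s (s v)) ≠ s v :=
    fun h h' => (hs v).2 (σ.injective (h'.trans h.symm))
  have unmoved_left : σ (s v) = s v → σ v ≠ s v :=
    fun h h' => (hs v).1 (σ.injective (h.trans h'.symm))
  have unmoved_right : σ (s v) = s v → σ (s (s v)) ≠ s v :=
    fun h h' => (hs (s v)).1 (σ.injective (h'.trans h.symm))
  obtain ⟨⟨_, two_steps⟩, next_step, -⟩ := And.intro (hs v) (hs (s v))
  simp only [cycleMatrix_apply hs, s.apply_eq_iff_eq]
  clear hs
  rcases hσ (s v) with image | image | image <;>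
    rcases hσ.preimage_apply v with preimage | preimage | preimage <;>
    simp_all [edgeTransfer, edgeState, two_steps.symm, next_step.symm]

theorem permanent_cycleMatrix [Fintype V] (hs : ∀ x, s x ≠ x ∧ s (s x) ≠ x) :
    (cycleMatrix α β γ s).permanent = cyclicSum (edgeTransfer α β γ) s := by
  have prod_eq {σ : Equiv.Perm V} (hσ : IsNearestNeighbor s σ) :
      ∏ v, cycleMatrix α β γ s (σ v) v =
        ∏ v, edgeTransfer α β γ (edgeState s σ v) (edgeState s σ (s v)) := by
    rw [← Equiv.prod_comp s]
    exact Finset.prod_congr rfl fun v _ => (edgeTransfer_edgeState hs hσ v).symm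
  refine Finset.sum_bij_ne_zero (fun σ _ _ => edgeState s σ) (fun _ _ _ => Finset.mem_univ _)
    (fun σ _ hσ τ _ hτ h => ?_) (fun e _ he => ?_) (fun σ _ hσ => ?_)
  · exact edgeState_injOn (isNearestNeighbor_of_prod_ne_zero hs hσ)
      (isNearestNeighbor_of_prod_ne_zero hs hτ) h
  · have compatible (v : V) : EdgeCompatible (e v) (e (s v)) :=
      edgeCompatible_of_edgeTransfer_ne_zero fun h0 =>
        he (Finset.prod_eq_zero (Finset.mem_univ v) h0)
    obtain ⟨σ, hσ, rfl⟩ := exists_isNearestNeighbor_edgeState_eq hs compatible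
    exact ⟨σ, Finset.mem_univ σ, by rwa [prod_eq hσ], rfl⟩
  · exact prod_eq (isNearestNeighbor_of_prod_ne_zero hs hσ)

theorem permanent_cycleMatrix_eq_prod_partition [Fintype V] (hs : ∀ x, s x ≠ x ∧ s (s x) ≠ x) :
    (cycleMatrix α β γ s).permanent =
      (s.partition.parts.map fun k => (edgeTransfer α β γ ^ k).trace).prod :=
  (permanent_cycleMatrix hs).trans (cyclicSum_eq_prod_partition _ s)

end Permanent

theorem exists_mem_LambdaHat_permanent_eq_iff {n : ℕ} {α β γ x : ℝ} :
    (∃ A ∈ LambdaHat n α β γ, A.permanent = x) ↔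
      ∃ p : Multiset ℕ, p.sum = n ∧ (∀ k ∈ p, 3 ≤ k) ∧
        (p.map fun k => (edgeTransfer α β γ ^ k).trace).prod = x := by
  constructor
  · rintro ⟨_, ⟨s, hs, rfl⟩, rfl⟩
    exact ⟨s.partition.parts, s.partition.parts_sum.trans (Fintype.card_fin n),
      forall_parts_partition_three_le_iff.mpr hs, (permanent_cycleMatrix_eq_prod_partition hs).symm⟩
  · rintro ⟨p, hsum, hp, rfl⟩
    obtain ⟨s, rfl⟩ := exists_parts_partition_eq (hsum.trans (Fintype.card_fin n).symm)
      fun k hk => three_pos.trans_le (hp k hk)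
    have hs := forall_parts_partition_three_le_iff.mp hp
    exact ⟨_, ⟨s, hs, rfl⟩, permanent_cycleMatrix_eq_prod_partition hs⟩

lemma exists_cube_root {a : ℝ} (ha : 0 ≤ a) :
    ∃ t, 0 ≤ t ∧ t ^ 3 = a ∧ a ^ ((1 : ℝ) / 3) = t ∧ a ^ ((2 : ℝ) / 3) = t ^ 2 := by
  refine ⟨a ^ ((1 : ℝ) / 3), Real.rpow_nonneg ha _, ?_, rfl, ?_⟩ <;>
  · rw [← Real.rpow_mul_natCast ha]
    norm_num

theorem stmt_6 (α β γ : ℝ)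
    (h1 : 0 ≤ α) (h2 : α ≤ β + γ) (h3 : 0 ≤ γ) (h4 : γ ≤ α + β)
    (a3 a4 : ℝ)
    (ha3 : a3 = α ^ 3 + β ^ 3 + γ ^ 3 + 3 * α * β * γ)
    (ha4 : a4 = α ^ 4 + β ^ 4 + γ ^ 4 + 4 * α * β ^ 2 * γ + 2 * α ^ 2 * γ ^ 2)
    (h5 : a4 ^ 3 ≤ a3 ^ 4)
    (h6 : α * γ + β * a3 ^ ((1 : ℝ) / 3) ≤ a3 ^ ((2 : ℝ) / 3))
    (n : ℕ) (hn : 3 ≤ n) (hn3 : 3 ∣ n) :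
    IsGreatest {x : ℝ | ∃ A ∈ LambdaHat n α β γ, A.permanent = x} (a3 ^ (n / 3)) := by
  have hβ : 0 ≤ β := by linarith
  have a3_nonneg : 0 ≤ a3 := by rw [ha3]; positivity
  obtain ⟨t, ht, rfl, cube_root, cube_root_sq⟩ := exists_cube_root a3_nonneg
  rw [cube_root, cube_root_sq] at h6
  have a4_le : a4 ≤ t ^ 4 :=
    le_of_pow_le_pow_left₀ three_ne_zero (by positivity) (h5.trans_eq (pow_right_comm t 3 4))
  have trace_le {k : ℕ} (hk : 3 ≤ k) : (edgeTransfer α β γ ^ k).trace ≤ t ^ k :=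
    trace_edgeTransfer_pow_le h1 hβ h3 h2 h4 ht h6 ha3.ge (ha4.symm.trans_le a4_le) hk
  simp only [exists_mem_LambdaHat_permanent_eq_iff]
  constructor
  · refine ⟨Multiset.replicate (n / 3) 3, ?_, fun k hk => (Multiset.eq_of_mem_replicate hk).ge, ?_⟩
    · rw [Multiset.sum_replicate, smul_eq_mul, Nat.div_mul_cancel hn3]
    · rw [Multiset.map_replicate, Multiset.prod_replicate, trace_edgeTransfer_pow_three, ha3]
  · rintro _ ⟨p, rfl, hp, rfl⟩
    rw [← pow_mul, Nat.mul_div_cancel' hn3]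
    exact prod_map_le_pow_sum (fun k _ => trace_edgeTransfer_pow_nonneg h1 hβ h3 k)
      fun k hk => trace_le (hp k hk)
end

section
/- Let α, γ be real numbers with 0 ≤ α ≤ (2^{1/3} − 1)^{1/4}·γ. Then for every integer n ≥ 3 divisible by 3, the maximum of per A over A ∈ Λ̂_n(α, γ−α, γ) equals 2^{n/3}·γⁿ. -/
open Matrix

/-!
The permanent of `α·Sᵀ + (γ - α)·I + γ·S` is the product of the permanents of its blocks on the
cycles of the permutation. On a cycle of length `k ≥ 3`, the permutations other than the cycle and
its inverse that contribute to the permanent are involutions, exchanging pairs of neighbours; such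
an exchange contributes `α * γ` to the permanent, and the same to the determinant once `α` is
replaced by `-α`, because of the sign. That determinant factors as `det (I + S) * det (γ·I - α·Sᵀ)`,
and the block has permanent `2 * γ ^ k + (1 + (-1) ^ k) * α ^ k`. With `τ ^ 3 = 2` this is at most
`(τ * γ) ^ k`, with equality for `k = 3`; the bound on `α` is what the case `k = 4` requires.
-/

open Equiv Equiv.Perm

section Fibres

variable {ι κ : Type*} [Fintype ι] [Fintype κ] [DecidableEq κ]

theorem prod_pow_card_fibre {M : Type*} [CommMonoid M] (f : ι → κ) (r : M) :
    ∏ k, r ^ Fintype.card {x // f x = k} = r ^ Fintype.card ι := by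
  simpa using Fintype.prod_fiberwise f fun _ => r

theorem permanent_eq_prod_permanent_toSquareBlock {R : Type*} [CommSemiring R] [DecidableEq ι]
    (M : Matrix ι ι R) (f : ι → κ) (hM : ∀ x y, f x ≠ f y → M x y = 0) :
    M.permanent = ∏ k, (M.toSquareBlock f k).permanent := by
  let glue (τ : ∀ k, Perm {x // f x = k}) : Perm ι :=
    (sigmaFiberEquiv f).permCongr (sigmaCongrRightHom _ τ)
  have glue_apply (τ) (k) (x : {x // f x = k}) : glue τ x = τ k x := by
    obtain ⟨x, rfl⟩ := x
    rfl
  have glue_injective : Function.Injective glue :=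
    (sigmaFiberEquiv f).permCongr.injective.comp sigmaCongrRightHom_injective
  simp only [permanent, Finset.prod_univ_sum, Fintype.piFinset_univ]
  symm
  refine Fintype.sum_of_injective glue glue_injective _ _ (fun σ hσ => ?_) fun τ => ?_
  · obtain ⟨x, hx⟩ : ∃ x, f (σ x) ≠ f x := by
      by_contra! hfix
      refine hσ ⟨fun k => σ.subtypePerm fun x => by rw [hfix], Perm.ext fun x => ?_⟩
      exact glue_apply _ _ ⟨x, rfl⟩
    exact Finset.prod_eq_zero (Finset.mem_univ x) (hM _ _ hx)
  · rw [← Fintype.prod_fiberwise f]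
    simp only [glue_apply, toSquareBlock_def, of_apply]

end Fibres

section Cycle

variable {ι : Type*} {s σ : Perm ι}

theorem forall_of_isCycleOn_univ [Finite ι] (hs : s.IsCycleOn Set.univ) {P : ι → Prop} {x : ι}
    (hx : P x) (hP : ∀ y, P y → P (s y)) (y : ι) : P y := by
  obtain ⟨i, rfl⟩ := hs.exists_pow_eq' Set.finite_univ (Set.mem_univ x) (Set.mem_univ y)
  induction i with
  | zero => exact hx
  | succ i ih => rw [pow_succ', mul_apply]; exact hP _ ih

theorem eq_one_or_eq_of_forall_apply_eq [Finite ι] (hs : s.IsCycleOn Set.univ)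
    (hσ : ∀ x, σ x = x ∨ σ x = s x) : σ = 1 ∨ σ = s := by
  by_contra! ⟨hσ_one, hσ_s⟩
  obtain ⟨x, hx⟩ : ∃ x, σ x ≠ x := by
    by_contra! hfix
    exact hσ_one (Perm.ext hfix)
  refine hσ_s (Perm.ext (forall_of_isCycleOn_univ hs ((hσ x).resolve_left hx) fun y hy => ?_))
  rcases hσ (s y) with hfix | hstep
  · have hsy : s y = y := σ.injective (hfix.trans hy.symm)
    rwa [hsy]
  · exact hstep

variable [Fintype ι]

theorem three_le_card_of_isCycleOn_univ [Nonempty ι] (hs : s.IsCycleOn Set.univ)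
    (h : ∀ x, s (s x) ≠ x) : 3 ≤ Fintype.card ι := by
  obtain ⟨x⟩ := ‹Nonempty ι›
  have hreturn : (s ^ Fintype.card ι) x = x :=
    IsCycleOn.pow_card_apply (s := Finset.univ) (by simpa using hs) (Finset.mem_univ x)
  have hpos : 0 < Fintype.card ι := Fintype.card_pos_iff.2 ⟨x⟩
  by_contra! hlt
  obtain hcard | hcard : Fintype.card ι = 1 ∨ Fintype.card ι = 2 := by lia
  · rw [hcard, pow_one] at hreturn
    exact h x (by rw [hreturn, hreturn])
  · rw [hcard, pow_two, mul_apply] at hreturn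
    exact h x hreturn

theorem card_eq_of_isCycleOn_univ_of_pow_eq_one [Nontrivial ι] {p : ℕ} (hp : p.Prime)
    (hs : s.IsCycleOn Set.univ) (hsp : s ^ p = 1) : Fintype.card ι = p := by
  have hdvd : Fintype.card ι ∣ p := by
    refine (IsCycleOn.pow_apply_eq (s := Finset.univ) (f := s) (by simpa using hs)
      (Finset.mem_univ (Classical.arbitrary ι))).1 ?_
    rw [hsp, Perm.one_apply]
  exact (hp.eq_one_or_self_of_dvd _ hdvd).resolve_left Fintype.one_lt_card.ne'

variable [DecidableEq ι]

theorem sign_of_isCycleOn_univ [Nontrivial ι] (hs : s.IsCycleOn Set.univ) :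
    sign s = -(-1) ^ Fintype.card ι := by
  have hfix (x : ι) : s x ≠ x := hs.apply_ne Set.nontrivial_univ (Set.mem_univ x)
  have hcycle : s.IsCycle :=
    isCycle_iff_exists_isCycleOn.2 ⟨_, Set.nontrivial_univ, hs, fun x _ => Set.mem_univ x⟩
  have hsupport : s.support = Finset.univ := by ext x; simp [hfix x]
  rw [hcycle.sign, hsupport, Finset.card_univ]

theorem det_smul_one_add_smul_permMatrix {R : Type*} [CommRing R] [Nontrivial ι]
    (hs : s.IsCycleOn Set.univ) (a b : R) :
    (a • (1 : Matrix ι ι R) + b • s.permMatrix R).det =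
      a ^ Fintype.card ι - (-b) ^ Fintype.card ι := by
  have hfix (x : ι) : s x ≠ x := hs.apply_ne Set.nontrivial_univ (Set.mem_univ x)
  have hne : (1 : Perm ι) ≠ s := by
    rintro rfl
    exact hfix (Classical.arbitrary ι) rfl
  have entry (x y : ι) : (a • (1 : Matrix ι ι R) + b • s.permMatrix R)ᵀ x y =
      (if x = y then a else 0) + if x = s y then b else 0 := by
    simp [Matrix.one_apply, eq_comm]
  rw [← det_transpose, det_apply', Finset.sum_eq_add_of_mem 1 s (Finset.mem_univ _)
    (Finset.mem_univ _) hne]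
  · simp [hfix, fun x => (hfix x).symm, sign_of_isCycleOn_univ hs, neg_pow b, sub_eq_add_neg]
  · rintro σ - ⟨hσ_one, hσ_s⟩
    obtain ⟨x, hx_fix, hx_step⟩ : ∃ x, σ x ≠ x ∧ σ x ≠ s x := by
      by_contra! hσ
      exact (eq_one_or_eq_of_forall_apply_eq hs fun x => or_iff_not_imp_left.2 (hσ x)).elim
        hσ_one hσ_s
    rw [Finset.prod_eq_zero (Finset.mem_univ x), mul_zero]
    simp only [entry, hx_fix, hx_step, ↓reduceIte, add_zero]

end Cycle

/-- `σ` moves every point by at most one step, forwards or backwards, along the cycles of `s`. Only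
such `σ` contribute to the permanent and the determinant of `bandMatrix s a b c`. -/
def IsBandPerm {ι : Type*} (s σ : Perm ι) : Prop :=
  ∀ x, σ x = s x ∨ σ x = x ∨ s (σ x) = x

namespace IsBandPerm

variable {ι : Type*} {s σ : Perm ι}

theorem inv_left (hσ : IsBandPerm s σ) : IsBandPerm s⁻¹ σ := fun x => by
  rw [eq_inv_iff_eq, inv_eq_iff_eq]
  exact or_rotate.1 (or_rotate.1 (hσ x)) |>.imp_right Or.symm

theorem eq_of_two_steps [Finite ι] (hσ : IsBandPerm s σ) (hs : s.IsCycleOn Set.univ)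
    (h : ∀ x, s (s x) ≠ x) {x : ι} (hx : σ x = s x) (hsx : σ (s x) = s (s x)) : σ = s := by
  have hstep : ∀ y, σ y = s y ∧ σ (s y) = s (s y) := by
    refine forall_of_isCycleOn_univ hs ⟨hx, hsx⟩ fun y ⟨hy, hsy⟩ => ⟨hsy, ?_⟩
    rcases hσ (s (s y)) with forward | fixed | backward
    · exact forward
    · have : s (s y) = s y := σ.injective (fixed.trans hsy.symm)
      exact absurd (by rw [this, this]) (h (s y))
    · exact absurd (σ.injective ((s.injective backward).trans hy.symm)) (h y)
  exact Perm.ext fun y => (hstep y).1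

theorem eq_or_eq_inv_or_involutive [Finite ι] (hσ : IsBandPerm s σ) (hs : s.IsCycleOn Set.univ)
    (h : ∀ x, s (s x) ≠ x) : σ = s ∨ σ = s⁻¹ ∨ Function.Involutive σ := by
  have h_inv (x : ι) : s⁻¹ (s⁻¹ x) ≠ x := by
    rw [ne_eq, inv_eq_iff_eq, inv_eq_iff_eq]
    exact (h x).symm
  by_contra! ⟨hne, hne_inv, hσσ⟩
  obtain ⟨x, hx⟩ : ∃ x, σ (σ x) ≠ x := by simpa [Function.Involutive] using hσσ
  rcases hσ x with forward | fixed | backward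
  · rcases hσ (σ x) with forward' | fixed' | backward'
    · rw [forward] at forward'
      exact hne (hσ.eq_of_two_steps hs h forward forward')
    · exact hx (fixed'.trans (σ.injective fixed'))
    · exact hx (s.injective (backward'.trans forward))
  · exact hx (by rw [fixed, fixed])
  · rcases hσ (σ x) with forward' | fixed' | backward'
    · exact hx (forward'.trans backward)
    · exact hx (fixed'.trans (σ.injective fixed'))
    · have hx_inv : σ x = s⁻¹ x := eq_inv_iff_eq.2 backward
      refine hne_inv (hσ.inv_left.eq_of_two_steps hs.inv h_inv hx_inv ?_)
      rw [← hx_inv, eq_inv_iff_eq, backward']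

theorem sign_of_involutive [Fintype ι] [DecidableEq ι] (hσ : IsBandPerm s σ)
    (h : ∀ x, s (s x) ≠ x) (hσσ : Function.Involutive σ) :
    sign σ = (-1) ^ Fintype.card {x // σ x = s x} := by
  let forward : Finset ι := {x | σ x = s x}
  have mem_forward (x : ι) : x ∈ forward ↔ σ x = s x := Finset.mem_filter_univ x
  have mem_map_forward (x : ι) : x ∈ forward.map σ.toEmbedding ↔ x = s (σ x) := by
    have hsymm : σ.symm x = σ x := by rw [symm_apply_eq, hσσ]
    simp [mem_forward, Finset.mem_map_equiv, hsymm, hσσ x]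
  have hsupport : σ.support = forward ∪ forward.map σ.toEmbedding := by
    ext x
    have hfix : s x ≠ x := fun hx => h x (by rw [hx, hx])
    have hband := hσ x
    simp only [mem_support, Finset.mem_union, mem_forward, mem_map_forward]
    grind
  have hdisjoint : _root_.Disjoint forward (forward.map σ.toEmbedding) := by
    refine Finset.disjoint_left.2 fun x hx hx' => h x ?_
    rw [← (mem_forward x).1 hx, ← (mem_map_forward x).1 hx']
  have hcard : σ.support.card = 2 * Fintype.card {x // σ x = s x} := by
    rw [hsupport, Finset.card_union_of_disjoint hdisjoint, Finset.card_map, Fintype.card_subtype,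
      two_mul]
  rw [sign_of_pow_two_eq_one (Perm.ext hσσ), card_fixedPoints, sum_cycleType,
    Nat.sub_sub_self (Finset.card_le_univ _), hcard, Nat.mul_div_cancel_left _ two_pos]

end IsBandPerm

/-- The matrix `a·Sᵀ + b·I + c·S`, where `S` is the permutation matrix of `s`. -/
def bandMatrix {ι R : Type*} [DecidableEq ι] [Semiring R] (s : Perm ι) (a b c : R) :
    Matrix ι ι R :=
  a • (s⁻¹).permMatrix R + b • (1 : Matrix ι ι R) + c • s.permMatrix R

section BandMatrix

variable {ι R : Type*} [DecidableEq ι]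

theorem bandMatrix_apply [Semiring R] (s : Perm ι) (a b c : R) (y x : ι) :
    bandMatrix s a b c y x =
      (if y = s x then a else 0) + (if y = x then b else 0) + if s y = x then c else 0 := by
  simp [bandMatrix, Matrix.one_apply, symm_apply_eq]

theorem prod_bandMatrix_eq_zero [Fintype ι] [CommSemiring R] {s σ : Perm ι}
    (hσ : ¬ IsBandPerm s σ) (a b c : R) : ∏ x, bandMatrix s a b c (σ x) x = 0 := by
  obtain ⟨x, forward, fixed, backward⟩ : ∃ x, σ x ≠ s x ∧ σ x ≠ x ∧ s (σ x) ≠ x := by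
    simpa [IsBandPerm] using hσ
  exact Finset.prod_eq_zero (Finset.mem_univ x)
    (by simp only [bandMatrix_apply, forward, fixed, backward, ↓reduceIte, add_zero])

theorem toSquareBlock_bandMatrix [Semiring R] {κ : Type*} (s : Perm ι) {f : ι → κ}
    (hf : ∀ x, f (s x) = f x) (a b c : R) (k : κ) :
    (bandMatrix s a b c).toSquareBlock f k =
      bandMatrix (s.subtypePerm (p := fun x => f x = k) fun x => by rw [hf]) a b c := by
  ext x y
  simp [toSquareBlock_def, bandMatrix_apply, Subtype.ext_iff]

variable [Fintype ι] {s : Perm ι}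

theorem prod_bandMatrix_self [CommSemiring R] (h : ∀ x, s (s x) ≠ x) (a b c : R) :
    ∏ x, bandMatrix s a b c (s x) x = a ^ Fintype.card ι := by
  have hfix (x : ι) : s x ≠ x := fun hx => h x (by rw [hx, hx])
  simp [bandMatrix_apply, hfix, h]

theorem prod_bandMatrix_inv [CommSemiring R] (h : ∀ x, s (s x) ≠ x) (a b c : R) :
    ∏ x, bandMatrix s a b c (s⁻¹ x) x = c ^ Fintype.card ι := by
  have hfix (x : ι) : x ≠ s x := fun hx => h x (by rw [← hx, ← hx])
  simp [bandMatrix_apply, symm_apply_eq, hfix, (h _).symm]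

variable [CommRing R]

theorem IsBandPerm.prod_bandMatrix_of_involutive {σ : Perm ι} (hσ : IsBandPerm s σ)
    (h : ∀ x, s (s x) ≠ x) (hσσ : Function.Involutive σ) (a b c : R) :
    ∏ x, bandMatrix s a b c (σ x) x = (sign σ : ℤ) * ∏ x, bandMatrix s (-a) b c (σ x) x := by
  have hfix (x : ι) : s x ≠ x := fun hx => h x (by rw [hx, hx])
  have entry (x : ι) : bandMatrix s a b c (σ x) x =
      (if σ x = s x then -1 else 1) * bandMatrix s (-a) b c (σ x) x := by
    by_cases hx : σ x = s x
    · simp [bandMatrix_apply, hx, hfix, h]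
    · simp [bandMatrix_apply, hx]
  simp only [entry, Finset.prod_mul_distrib, hσ.sign_of_involutive h hσσ, Fintype.card_subtype]
  simp [Finset.prod_ite]

/- The involutions contribute equally to the two sides, which leaves `σ = s` and `σ = s⁻¹`. -/
theorem permanent_bandMatrix_eq_det_add [Nonempty ι] (hs : s.IsCycleOn Set.univ)
    (h : ∀ x, s (s x) ≠ x) (a b c : R) :
    (bandMatrix s a b c).permanent = (bandMatrix s (-a) b c).det +
      (2 * a ^ Fintype.card ι + (1 + (-1) ^ Fintype.card ι) * c ^ Fintype.card ι) := by
  have : Nontrivial ι := Fintype.one_lt_card_iff_nontrivial.1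
    ((three_le_card_of_isCycleOn_univ hs h).trans_lt' (by norm_num))
  have hne : s ≠ s⁻¹ := fun hinv =>
    h (Classical.arbitrary ι) (by rw [← eq_inv_iff_eq, ← hinv])
  rw [← sub_eq_iff_eq_add', permanent, det_apply', ← Finset.sum_sub_distrib,
    Finset.sum_eq_add_of_mem s s⁻¹ (Finset.mem_univ _) (Finset.mem_univ _) hne]
  · have hsq : ((-1 : R) ^ Fintype.card ι) * (-1) ^ Fintype.card ι = 1 := by
      simp [← mul_pow]
    rw [prod_bandMatrix_self h, prod_bandMatrix_self h, prod_bandMatrix_inv h,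
      prod_bandMatrix_inv h, sign_inv, sign_of_isCycleOn_univ hs, neg_pow a]
    push_cast
    linear_combination a ^ Fintype.card ι * hsq
  · rintro σ - ⟨hσ_s, hσ_inv⟩
    by_cases hσ : IsBandPerm s σ
    · have hσσ := ((hσ.eq_or_eq_inv_or_involutive hs h).resolve_left hσ_s).resolve_left hσ_inv
      rw [hσ.prod_bandMatrix_of_involutive h hσσ, sub_self]
    · rw [prod_bandMatrix_eq_zero hσ, prod_bandMatrix_eq_zero hσ, mul_zero, sub_zero]

theorem bandMatrix_neg_sub_eq_mul (s : Perm ι) (a c : R) :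
    bandMatrix s (-a) (c - a) c =
      ((1 : R) • (1 : Matrix ι ι R) + (1 : R) • s.permMatrix R) *
        (c • (1 : Matrix ι ι R) + (-a) • (s⁻¹).permMatrix R) := by
  have hinv : s.permMatrix R * (s⁻¹).permMatrix R = 1 := by
    rw [← permMatrix_mul, inv_mul_cancel, permMatrix_one]
  simp only [bandMatrix, add_mul, mul_add, Matrix.smul_mul, Matrix.mul_smul, hinv, Matrix.one_mul,
    Matrix.mul_one]
  module

theorem permanent_bandMatrix_of_isCycleOn_univ [Nonempty ι] (hs : s.IsCycleOn Set.univ)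
    (h : ∀ x, s (s x) ≠ x) (a c : R) :
    (bandMatrix s a (c - a) c).permanent =
      2 * c ^ Fintype.card ι + (1 + (-1) ^ Fintype.card ι) * a ^ Fintype.card ι := by
  have : Nontrivial ι := Fintype.one_lt_card_iff_nontrivial.1
    ((three_le_card_of_isCycleOn_univ hs h).trans_lt' (by norm_num))
  rw [permanent_bandMatrix_eq_det_add hs h, bandMatrix_neg_sub_eq_mul, det_mul,
    det_smul_one_add_smul_permMatrix hs, det_smul_one_add_smul_permMatrix hs.inv, neg_neg, one_pow]
  ring

end BandMatrix

section CycleClass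

/-- The type of cycles of `s`, fixed points being cycles of length one. -/
def CycleClass {ι : Type*} (s : Perm ι) : Type _ :=
  Quotient (SameCycle.setoid s)

variable {ι : Type*} (s : Perm ι)

noncomputable instance [Finite ι] : Fintype (CycleClass s) :=
  @Fintype.ofFinite _ (Quotient.finite _)

noncomputable instance : DecidableEq (CycleClass s) :=
  Classical.decEq _

/-- The cycle of `s` through a point. -/
def cycleClass (x : ι) : CycleClass s :=
  Quotient.mk _ x

theorem cycleClass_eq_iff {x y : ι} : cycleClass s x = cycleClass s y ↔ s.SameCycle x y :=
  Quotient.eq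

theorem cycleClass_apply (x : ι) : cycleClass s (s x) = cycleClass s x :=
  (cycleClass_eq_iff s).2 (sameCycle_apply_left.2 (SameCycle.refl s x))

instance nonempty_cycleClass_fibre (k : CycleClass s) : Nonempty {x // cycleClass s x = k} :=
  let ⟨x, hx⟩ := Quotient.exists_rep k
  ⟨x, hx⟩

/-- The permutation of the points of the cycle `k` that `s` induces. -/
def cycleRestrict (k : CycleClass s) : Perm {x // cycleClass s x = k} :=
  s.subtypePerm fun x => by rw [cycleClass_apply]

theorem isCycleOn_univ_cycleRestrict (k : CycleClass s) :
    (cycleRestrict s k).IsCycleOn Set.univ :=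
  ⟨Set.bijOn_univ.2 (cycleRestrict s k).bijective, fun x _ y _ =>
    sameCycle_subtypePerm.2 ((cycleClass_eq_iff s).1 (x.2.trans y.2.symm))⟩

variable {s}

theorem cycleRestrict_apply_apply_ne (h : ∀ x, s (s x) ≠ x) (k : CycleClass s)
    (x : {x // cycleClass s x = k}) : cycleRestrict s k (cycleRestrict s k x) ≠ x := fun hx =>
  h x (congrArg Subtype.val hx)

variable [Fintype ι]

theorem three_le_card_cycleClass_fibre (h : ∀ x, s (s x) ≠ x)
    (k : CycleClass s) : 3 ≤ Fintype.card {x // cycleClass s x = k} :=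
  three_le_card_of_isCycleOn_univ (isCycleOn_univ_cycleRestrict s k)
    (cycleRestrict_apply_apply_ne h k)

theorem permanent_bandMatrix [DecidableEq ι] {R : Type*} [CommRing R] (h : ∀ x, s (s x) ≠ x)
    (a c : R) :
    (bandMatrix s a (c - a) c).permanent = ∏ k : CycleClass s,
      (2 * c ^ Fintype.card {x // cycleClass s x = k} +
        (1 + (-1) ^ Fintype.card {x // cycleClass s x = k}) *
          a ^ Fintype.card {x // cycleClass s x = k}) := by
  rw [permanent_eq_prod_permanent_toSquareBlock _ (cycleClass s)]
  · refine Finset.prod_congr rfl fun k _ => ?_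
    rw [toSquareBlock_bandMatrix s (cycleClass_apply s)]
    exact permanent_bandMatrix_of_isCycleOn_univ (isCycleOn_univ_cycleRestrict s k)
      (cycleRestrict_apply_apply_ne h k) a c
  · intro x y hxy
    have hforward : x ≠ s y := by rintro rfl; exact hxy (cycleClass_apply s y)
    have hfixed : x ≠ y := by rintro rfl; exact hxy rfl
    have hbackward : s x ≠ y := by rintro rfl; exact hxy (cycleClass_apply s x).symm
    simp only [bandMatrix_apply, hforward, hfixed, hbackward, ↓reduceIte, add_zero]

end CycleClass

section OrderThree

variable {ι : Type*} [Fintype ι]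

theorem exists_perm_pow_prime_eq_one {p : ℕ} (hp : p.Prime) (hdvd : p ∣ Fintype.card ι) :
    ∃ s : Perm ι, s ^ p = 1 ∧ ∀ x, s x ≠ x := by
  classical
  have : Fact p.Prime := ⟨hp⟩
  obtain ⟨m, hm⟩ := hdvd
  obtain ⟨s, hs⟩ := (exists_with_cycleType_iff ι (m := Multiset.replicate m p)).2
    ⟨by rw [Multiset.sum_replicate, smul_eq_mul, hm, mul_comm], fun k hk =>
      (Multiset.eq_of_mem_replicate hk).symm ▸ hp.two_le⟩
  have hsupport : s.support = Finset.univ := by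
    rw [← Finset.card_eq_iff_eq_univ, ← sum_cycleType, hs, Multiset.sum_replicate, smul_eq_mul, hm,
      mul_comm]
  refine ⟨s, pow_prime_eq_one_iff.2 fun k hk => ?_, fun x => ?_⟩
  · rw [hs] at hk
    exact Multiset.eq_of_mem_replicate hk
  · rw [← mem_support, hsupport]
    exact Finset.mem_univ x

theorem apply_apply_ne_of_pow_three_eq_one {ι : Type*} {s : Perm ι} (hs : s ^ 3 = 1) {x : ι}
    (hx : s x ≠ x) : s (s x) ≠ x := fun hssx => by
  have hsssx : s (s (s x)) = x := Perm.congr_fun hs x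
  rw [hssx] at hsssx
  exact hx hsssx

theorem permanent_bandMatrix_of_pow_three_eq_one [DecidableEq ι] {R : Type*} [CommRing R]
    {s : Perm ι} (hs : s ^ 3 = 1) (hfix : ∀ x, s x ≠ x) (a c : R) :
    (bandMatrix s a (c - a) c).permanent = 2 ^ (Fintype.card ι / 3) * c ^ Fintype.card ι := by
  have h (x : ι) : s (s x) ≠ x := apply_apply_ne_of_pow_three_eq_one hs (hfix x)
  have hcard (k : CycleClass s) :
      Fintype.card {x // cycleClass s x = k} = 3 := by
    have : Nontrivial {x // cycleClass s x = k} := Fintype.one_lt_card_iff_nontrivial.1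
      ((three_le_card_cycleClass_fibre h k).trans_lt' (by norm_num))
    refine card_eq_of_isCycleOn_univ_of_pow_eq_one Nat.prime_three
      (isCycleOn_univ_cycleRestrict s k) (Perm.ext fun x => Subtype.ext ?_)
    exact Perm.congr_fun hs x
  have hι : Fintype.card ι = 3 * Fintype.card (CycleClass s) := by
    rw [← Fintype.card_congr (sigmaFiberEquiv (cycleClass s)), Fintype.card_sigma]
    simp only [hcard, Finset.sum_const, Finset.card_univ, smul_eq_mul, mul_comm]
  rw [permanent_bandMatrix h]
  simp only [hcard]
  rw [Finset.prod_const, Finset.card_univ, hι, Nat.mul_div_cancel_left _ three_pos]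
  ring

end OrderThree

section UpperBound

variable {α γ τ : ℝ}

theorem two_mul_pow_add_le (hα : 0 ≤ α) (hγ : 0 ≤ γ) (hτ : τ ^ 3 = 2)
    (hατ : α ^ 4 ≤ (τ - 1) * γ ^ 4) {k : ℕ} (hk : 3 ≤ k) :
    2 * γ ^ k + (1 + (-1) ^ k) * α ^ k ≤ (τ * γ) ^ k := by
  have hτ_one : 1 ≤ τ := by nlinarith [sq_nonneg (τ + 1)]
  have hτ_two : τ ≤ 2 := by nlinarith [sq_nonneg (τ + 1)]
  have hαγ : α ≤ γ := (pow_le_pow_iff_left₀ hα hγ four_ne_zero).1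
    (hατ.trans (mul_le_of_le_one_left (by positivity) (by linarith)))
  rw [mul_pow]
  obtain hodd | rfl | ⟨heven, hk⟩ : Odd k ∨ k = 4 ∨ Even k ∧ 6 ≤ k := by grind
  · have hτk : 2 ≤ τ ^ k := hτ ▸ pow_le_pow_right₀ hτ_one hk
    rw [hodd.neg_one_pow, add_neg_cancel, zero_mul, add_zero]
    gcongr
  · calc 2 * γ ^ 4 + (1 + (-1) ^ 4) * α ^ 4 ≤ 2 * γ ^ 4 + 2 * ((τ - 1) * γ ^ 4) := by linarith
      _ = τ ^ 3 * τ * γ ^ 4 := by rw [hτ]; ring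
      _ = τ ^ 4 * γ ^ 4 := by ring
  · have hτk : 4 ≤ τ ^ k := calc
      4 = (τ ^ 3) ^ 2 := by rw [hτ]; norm_num
      _ = τ ^ 6 := by ring
      _ ≤ τ ^ k := pow_le_pow_right₀ hτ_one hk
    calc 2 * γ ^ k + (1 + (-1) ^ k) * α ^ k ≤ 2 * γ ^ k + (1 + 1) * γ ^ k := by
          rw [heven.neg_one_pow]; gcongr
      _ = 4 * γ ^ k := by ring
      _ ≤ τ ^ k * γ ^ k := by gcongr

theorem permanent_bandMatrix_le {ι : Type*} [Fintype ι] [DecidableEq ι] {s : Perm ι}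
    (h : ∀ x, s (s x) ≠ x) (hα : 0 ≤ α) (hγ : 0 ≤ γ) (hτ : τ ^ 3 = 2)
    (hατ : α ^ 4 ≤ (τ - 1) * γ ^ 4) :
    (bandMatrix s α (γ - α) γ).permanent ≤ (τ * γ) ^ Fintype.card ι := by
  have one_add_neg_one_pow_nonneg (k : ℕ) : (0 : ℝ) ≤ 1 + (-1) ^ k := by
    rcases neg_one_pow_eq_or ℝ k with hk | hk <;> norm_num [hk]
  rw [permanent_bandMatrix h, ← prod_pow_card_fibre (cycleClass s)]
  refine Finset.prod_le_prod (fun k _ => ?_) fun k _ =>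
    two_mul_pow_add_le hα hγ hτ hατ (three_le_card_cycleClass_fibre h k)
  have := one_add_neg_one_pow_nonneg (Fintype.card {x // cycleClass s x = k})
  positivity

end UpperBound

theorem stmt_8 (α γ : ℝ) (h1 : 0 ≤ α)
    (h2 : α ≤ ((2 : ℝ) ^ ((1 : ℝ) / 3) - 1) ^ ((1 : ℝ) / 4) * γ)
    (n : ℕ) (hn : 3 ≤ n) (hn3 : 3 ∣ n) :
    IsGreatest {x : ℝ | ∃ A ∈ LambdaHat n α (γ - α) γ, A.permanent = x}
      (2 ^ (n / 3) * γ ^ n) := by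
  set τ : ℝ := (2 : ℝ) ^ ((1 : ℝ) / 3) with hτ_def
  set c : ℝ := (τ - 1) ^ ((1 : ℝ) / 4) with hc_def
  have hτ : τ ^ 3 = 2 := by
    rw [hτ_def, one_div]; exact Real.rpow_inv_natCast_pow zero_le_two three_ne_zero
  have hτ_one : 1 < τ := Real.one_lt_rpow one_lt_two (by norm_num)
  have hc : c ^ 4 = τ - 1 := by
    rw [hc_def, one_div]; exact Real.rpow_inv_natCast_pow (sub_pos.2 hτ_one).le four_ne_zero
  have hγ : 0 ≤ γ :=
    nonneg_of_mul_nonneg_right (h1.trans h2) (Real.rpow_pos_of_pos (sub_pos.2 hτ_one) _)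
  have hατ : α ^ 4 ≤ (τ - 1) * γ ^ 4 := by
    rw [← hc, ← mul_pow]; exact pow_le_pow_left₀ h1 h2 4
  constructor
  · obtain ⟨s, hs, hfix⟩ := exists_perm_pow_prime_eq_one (ι := Fin n) Nat.prime_three
      (by rwa [Fintype.card_fin])
    refine ⟨bandMatrix s α (γ - α) γ, ⟨s, fun x =>
      ⟨hfix x, apply_apply_ne_of_pow_three_eq_one hs (hfix x)⟩, rfl⟩, ?_⟩
    rw [permanent_bandMatrix_of_pow_three_eq_one hs hfix, Fintype.card_fin]
  · rintro _ ⟨_, ⟨s, hs, rfl⟩, rfl⟩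
    have hbound := permanent_bandMatrix_le (fun x => (hs x).2) h1 hγ hτ hατ
    have hτn : τ ^ n = 2 ^ (n / 3) := by rw [← hτ, ← pow_mul, Nat.mul_div_cancel' hn3]
    rwa [Fintype.card_fin, mul_pow, hτn] at hbound
end
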